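/- arXiv:2009.04827 — 5 statements merged into one kernel-verified Lean document; each statement's English description precedes it below -/
import Mathlib

section
/- For every odd n ≥ 3, every occurrence of the string 0 · 1 · 0^{n−2} · 1 in S_n = db(n)^n that has a following bit inside S_n is followed by the bit 1; moreover, 0 · 1 · 0^{n−2} · 1 occurs exactly n times in S_n viewed cyclically (i.e., as a substring of S_n ++ S_n[0..n−1]). -/
/-- `occ w x`: the number of indices `i` with `x[i..i+|w|-1] = w`,
i.e. the number of occurrences of `w` as a substring of `x`. -/
def occ (w x : List Bool) : ℕ :=
  ((List.range (x.length + 1 - w.length)).filter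
    (fun i => decide ((x.drop i).take w.length = w))).length

/-- `occB w x`: the number of occurrences of `w` as a substring of `x`
starting at a position divisible by `|w|` (aligned block occurrences). -/
def occB (w x : List Bool) : ℕ :=
  ((List.range (x.length + 1 - w.length)).filter
    (fun i => decide (i % w.length = 0) && decide ((x.drop i).take w.length = w))).length

/-- `x` is a de Bruijn string of order `n`: it has length `2^n` and every binary
string of length `n` occurs exactly once as a substring of `x ++ x[0..n-2]`. -/
def IsDeBruijn (n : ℕ) (x : List Bool) : Prop :=
  x.length = 2 ^ n ∧ ∀ w : List Bool, w.length = n → occ w (x ++ x.take (n - 1)) = 1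

open Classical in
/-- `db n` is the lexicographically least de Bruijn string of order `n`
(using the lexicographic order on `List Bool`, with `false < true`);
`[]` if none exists. -/
noncomputable def db (n : ℕ) : List Bool :=
  if h : ∃ x : List Bool, IsDeBruijn n x ∧ ∀ y, IsDeBruijn n y → x ≤ y then h.choose else []

/-- The block `B_{n,i} = db_i(n)^t`: `t` copies of the cyclic left shift of `db n` by `i`. -/
noncomputable def Bblk (n t i : ℕ) : List Bool := (List.replicate t ((db n).rotate i)).flatten

/-- The odd part `t` of `n = 2^s * t`. -/
def oddPart (n : ℕ) : ℕ := n / 2 ^ (n.factorization 2)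

/-- `Sblk n` is the string `S_n = B_{n,0} B_{n,1} ⋯ B_{n,2^s-1}` where `n = 2^s * t`, `t` odd. -/
noncomputable def Sblk (n : ℕ) : List Bool :=
  ((List.range (2 ^ (n.factorization 2))).map (fun i => Bblk n (oddPart n) i)).flatten

/-- `Sfin m = S_1 S_2 ⋯ S_m`. -/
noncomputable def Sfin (m : ℕ) : List Bool := ((List.range m).map (fun k => Sblk (k + 1))).flatten

/-- The infinite sequence `S = S_1 S_2 S_3 ⋯`, as a function giving its `i`-th bit. -/
noncomputable def Sseq (i : ℕ) : Bool := (Sfin (i + 1)).getD i false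

/-- For odd `n`, `S_n = db(n)^n`. -/
noncomputable def Sodd (n : ℕ) : List Bool := (List.replicate n (db n)).flatten

open Classical in
/-- The greedy (prefer-zero) sequence, started with `d` ones. -/
noncomputable def gseq (d : ℕ) (i : ℕ) : Bool :=
  if _h : i < d then true
  else decide (∃ m : Fin (i - d),
    (∀ k : Fin d, gseq d (m.1 + k.1) = gseq d (i - d + k.1)) ∧ gseq d (m.1 + d) = false)
termination_by i
decreasing_by all_goals omega

structure Greedy (d : ℕ) (a : ℕ → Bool) : Prop where
  ini : ∀ i, i < d → a i = true
  step : ∀ s, a (s + d) = true ↔ ∃ m, m < s ∧ (∀ k, k < d → a (m + k) = a (s + k)) ∧ a (m + d) = false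

lemma gseq_greedy (d : ℕ) : Greedy d (gseq d) := by
  constructor
  · intro i hi
    rw [gseq]; simp [hi]
  · intro s
    rw [gseq]
    have : ¬ (s + d < d) := by omega
    simp only [this, dite_false, decide_eq_true_eq, Nat.add_sub_cancel]
    constructor
    · rintro ⟨m, e, e0⟩
      exact ⟨m.1, by omega, fun k hk => e ⟨k, hk⟩, e0⟩
    · rintro ⟨m, hm, e, e0⟩
      exact ⟨⟨m, by omega⟩, fun k => e k.1 k.2, e0⟩

lemma Greedy.zeros {d : ℕ} {a : ℕ → Bool} (h : Greedy d a) : ∀ i, d ≤ i → i ≤ 2 * d → a i = false := by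
  intro i
  induction i using Nat.strong_induction_on with
  | _ i ih =>
    intro h1 h2
    obtain ⟨s, rfl⟩ : ∃ s, i = s + d := ⟨i - d, by omega⟩
    by_contra hc
    rw [Bool.not_eq_false, h.step] at hc
    obtain ⟨m, hm, he, h0⟩ := hc
    -- index k = d - s : a (s + k) = a d is false, or equals the end
    rcases Nat.eq_zero_or_pos s with rfl | hs
    · omega
    · have e1 := he (d - s) (by omega)
      rw [show s + (d - s) = d by omega, ih d (by omega) le_rfl (by omega),
        h.ini _ (by omega)] at e1
      cases e1

lemma Greedy.one {d : ℕ} {a : ℕ → Bool} (h : Greedy d a) (hd : 1 ≤ d) : a (2 * d + 1) = true := by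
  rw [show 2 * d + 1 = (d + 1) + d by ring, h.step]
  refine ⟨d, by omega, ?_, h.zeros _ (by omega) (by omega)⟩
  intro k hk
  rw [h.zeros _ (by omega) (by omega), h.zeros _ (by omega) (by omega)]

lemma Greedy.zero2 {d : ℕ} {a : ℕ → Bool} (h : Greedy d a) (hd : 2 ≤ d) : a (2 * d + 2) = false := by
  by_contra hc
  rw [Bool.not_eq_false, show 2 * d + 2 = (d + 2) + d by ring, h.step] at hc
  obtain ⟨m, hm, he, h0⟩ := hc
  have e1 := he (d - 1) (by omega)
  rw [show d + 2 + (d - 1) = 2 * d + 1 by omega, h.one (by omega)] at e1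
  have e2 := he 0 (by omega)
  rw [h.zeros (d + 2 + 0) (by omega) (by omega)] at e2
  have hm0 : d ≤ m := by
    by_contra hlt
    rw [h.ini _ (by omega)] at e2
    cases e2
  rw [h.zeros _ (by omega) (by omega)] at e1
  cases e1

/-- `f` occurs as a window (length `d+1`) before time `N`. -/
def Used (d N : ℕ) (a f : ℕ → Bool) : Prop := ∃ s, s < N ∧ ∀ k, k ≤ d → a (s + k) = f k

lemma Greedy.full {d : ℕ} {a : ℕ → Bool} (h : Greedy d a) (hd : 1 ≤ d) :
    (∀ f : ℕ → Bool, ∃ s, s < 2 ^ (d + 1) ∧ ∀ k, k ≤ d → a (s + k) = f k) ∧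
    (∀ k, k < d → a (2 ^ (d + 1) + k) = true) := by
  classical
  let W : ℕ → (Fin (d + 1) → Bool) := fun s k => a (s + k)
  have hW : ∀ s t, W s = W t ↔ ∀ k, k ≤ d → a (s + k) = a (t + k) := by
    intro s t
    constructor
    · intro e k hk
      exact congrFun e ⟨k, by omega⟩
    · intro e
      funext k
      exact e k (by omega)
  have hex : ∃ s, ∃ m, m < s ∧ W m = W s := by
    obtain ⟨x, y, hxy, e⟩ := Finite.exists_ne_map_eq_of_infinite W
    rcases lt_or_gt_of_ne hxy with hl | hl
    · exact ⟨y, x, hl, e⟩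
    · exact ⟨x, y, hl, e.symm⟩
  obtain ⟨N, hN, hmin⟩ : ∃ N, (∃ m, m < N ∧ W m = W N) ∧ ∀ s, s < N → ¬ ∃ m, m < s ∧ W m = W s :=
    ⟨Nat.find hex, Nat.find_spec hex, fun s hs => Nat.find_min hex hs⟩
  have hinj : ∀ s t, s < N → t < N → W s = W t → s = t := by
    intro s t hs ht e
    rcases lt_trichotomy s t with hl | hl | hl
    · exact absurd ⟨s, hl, e⟩ (hmin t ht)
    · exact hl
    · exact absurd ⟨t, hl, e.symm⟩ (hmin s hs)
  have hNle : N ≤ 2 ^ (d + 1) := by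
    have := Fintype.card_le_of_injective (fun s : Fin N => W s) (by
      intro s t e
      exact Fin.ext (hinj s t s.2 t.2 e))
    simpa using this
  -- one used exit implies zero used exit
  have hone : ∀ f : ℕ → Bool, Used d N a f → Used d N a (Function.update f d false) := by
    rintro f ⟨s, hs, e⟩
    rcases hf : f d with _ | _
    · exact ⟨s, hs, fun k hk => by
        rw [e k hk, Function.update_apply]; split_ifs with hkd
        · rw [hkd, hf]
        · rfl⟩
    · have := e d le_rfl
      rw [hf, h.step] at this
      obtain ⟨m, hm, em, m0⟩ := this
      refine ⟨m, by omega, fun k hk => ?_⟩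
      rw [Function.update_apply]; split_ifs with hkd
      · rw [hkd, m0]
      · rw [em k (by omega), e k hk]
  -- two distinct times with the same vertex, positive: both entries used
  have htwo : ∀ s t, 1 ≤ s → s < t → t ≤ N → (∀ k, k < d → a (s + k) = a (t + k)) →
      ∀ g : ℕ → Bool, (∀ k, k < d → g (k + 1) = a (s + k)) → Used d N a g := by
    intro s t hs hst ht e g hg
    by_cases c1 : a (s - 1) = g 0
    · refine ⟨s - 1, by omega, fun k hk => ?_⟩
      rcases k with _ | k
      · exact c1
      · rw [hg k (by omega), show s - 1 + (k + 1) = s + k by omega]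
    · refine ⟨t - 1, by omega, fun k hk => ?_⟩
      rcases k with _ | k
      · have hne : a (s - 1) ≠ a (t - 1) := by
          intro he
          have := hinj (s - 1) (t - 1) (by omega) (by omega) (by
            rw [hW]
            intro k hk
            rcases k with _ | k
            · exact he
            · rw [show s - 1 + (k + 1) = s + k by omega, show t - 1 + (k + 1) = t + k by omega]
              exact e k (by omega))
          omega
        rw [Nat.add_zero]
        revert c1 hne
        cases a (s - 1) <;> cases a (t - 1) <;> cases g 0 <;> simp
      · rw [hg k (by omega), show t - 1 + (k + 1) = t + k by omega, e k (by omega)]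
  -- analysis of N
  obtain ⟨m1, hm1, e1⟩ := hN
  rw [hW] at e1
  have hN1 : a (N + d) = true := by
    by_contra hc
    have : a (N + d) = true := by
      rw [h.step]
      refine ⟨m1, hm1, fun k hk => e1 k (by omega), ?_⟩
      rw [e1 d le_rfl]; simpa using hc
    exact hc this
  have hN2 := hN1
  rw [h.step] at hN2
  obtain ⟨m2, hm2, e2, m20⟩ := hN2
  have m11 : a (m1 + d) = true := by rw [e1 d le_rfl, hN1]
  -- m1, m2, N same vertex, m1 ≠ m2
  have key : ∀ s t, s < t → t < N → (∀ k, k < d → a (s + k) = a (N + k)) →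
      (∀ k, k < d → a (t + k) = a (N + k)) → s = 0 := by
    intro s t hst ht es et
    by_contra hs0
    have hA : ∀ x y, 1 ≤ x → x < y → y ≤ N → (∀ k, k < d → a (x + k) = a (N + k)) →
        (∀ k, k < d → a (y + k) = a (N + k)) → a (x - 1) ≠ a (y - 1) := by
      intro x y hx hxy hy ex ey he
      have := hinj (x - 1) (y - 1) (by omega) (by omega) (by
        rw [hW]
        intro k hk
        rcases k with _ | k
        · exact he
        · rw [show x - 1 + (k + 1) = x + k by omega, show y - 1 + (k + 1) = y + k by omega]
          rw [ex k (by omega), ey k (by omega)])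
      omega
    have h1 := hA s t (by omega) hst (by omega) es et
    have h2 := hA s N (by omega) (by omega) le_rfl es (fun _ _ => rfl)
    have h3 := hA t N (by omega) (by omega) le_rfl et (fun _ _ => rfl)
    revert h1 h2 h3
    cases a (s - 1) <;> cases a (t - 1) <;> cases a (N - 1) <;> simp
  have e1' : ∀ k, k < d → a (m1 + k) = a (N + k) := fun k hk => e1 k (by omega)
  have hne : m1 ≠ m2 := by
    rintro rfl
    rw [m11] at m20; cases m20
  obtain ⟨t0, ht0, ht0N, et0, ez⟩ : ∃ t, 1 ≤ t ∧ t < N ∧ (∀ k, k < d → a (t + k) = a (N + k)) ∧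
      (∀ k, k < d → a (0 + k) = a (N + k)) := by
    rcases lt_or_gt_of_ne hne with hl | hl
    · have := key m1 m2 hl hm2 e1' e2
      subst this
      exact ⟨m2, by omega, hm2, e2, e1'⟩
    · have := key m2 m1 hl hm1 e2 e1'
      subst this
      exact ⟨m1, by omega, hm1, e1', e2⟩
  have hNt : ∀ k, k < d → a (N + k) = true := by
    intro k hk
    rw [← ez k hk]
    exact h.ini _ (by omega)
  -- everything used
  have hall : ∀ j, j ≤ d → ∀ f : ℕ → Bool, (∀ k, j ≤ k → k < d → f k = true) →
      Used d N a f := by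
    intro j
    induction j with
    | zero =>
      intro _ f hf
      rcases hfd : f d with _ | _
      · refine ⟨m2, hm2, fun k hk => ?_⟩
        rcases Nat.lt_or_eq_of_le hk with hk | rfl
        · rw [e2 k hk, hNt k hk, hf k (by omega) hk]
        · rw [m20, hfd]
      · refine ⟨m1, hm1, fun k hk => ?_⟩
        rcases Nat.lt_or_eq_of_le hk with hk | rfl
        · rw [e1' k hk, hNt k hk, hf k (by omega) hk]
        · rw [m11, hfd]
    | succ j ih =>
      intro hj f hf
      -- it suffices to use f with last bit true
      suffices hs : Used d N a (Function.update f d true) by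
        rcases hfd : f d with _ | _
        · have := hone _ hs
          rwa [Function.update_idem, ← hfd, Function.update_eq_self] at this
        · rwa [← hfd, Function.update_eq_self] at hs
      have hu : ∀ b, Used d N a (Function.update (fun k => if k + 1 < d then f (k + 1) else true) d b) := by
        intro b
        apply ih (by omega)
        intro k hk hkd
        rw [Function.update_apply, if_neg (by omega)]
        split_ifs with hc
        · exact hf _ (by omega) hc
        · rfl
      obtain ⟨s, hs, es⟩ := hu false
      obtain ⟨t, ht, et⟩ := hu true
      have es' : ∀ k, k < d → a (s + k) = if k + 1 < d then f (k + 1) else true := by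
        intro k hk
        rw [es k (by omega), Function.update_apply, if_neg (by omega)]
      have et' : ∀ k, k < d → a (t + k) = if k + 1 < d then f (k + 1) else true := by
        intro k hk
        rw [et k (by omega), Function.update_apply, if_neg (by omega)]
      have hst : s ≠ t := by
        rintro rfl
        have q1 := es d le_rfl
        have q2 := et d le_rfl
        rw [q1] at q2
        simp at q2
      have hg : ∀ k, k < d → (Function.update f d true) (k + 1) = if k + 1 < d then f (k + 1) else true := by
        intro k hk
        rw [Function.update_apply]
        by_cases hc : k + 1 = d
        · simp [hc]
        · rw [if_neg hc, if_pos (by omega)]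
      -- WLOG
      have hfin : ∀ x y, x < y → y < N →
          (∀ k, k < d → a (x + k) = if k + 1 < d then f (k + 1) else true) →
          (∀ k, k < d → a (y + k) = if k + 1 < d then f (k + 1) else true) →
          Used d N a (Function.update f d true) := by
        intro x y hxy hy ex ey
        rcases Nat.eq_zero_or_pos x with rfl | hx
        · refine htwo y N (by omega) hy le_rfl ?_ _ ?_
          · intro k hk
            rw [ey k hk, ← ex k hk, ez k hk]
          · intro k hk
            rw [hg k hk, ey k hk]
        · refine htwo x y hx hxy (by omega) ?_ _ ?_
          · intro k hk
            rw [ey k hk, ← ex k hk]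
          · intro k hk
            rw [hg k hk, ex k hk]
      rcases lt_or_gt_of_ne hst with hl | hl
      · exact hfin s t hl ht es' et'
      · exact hfin t s hl hs et' es'
  have hU : ∀ f : ℕ → Bool, Used d N a f := fun f => hall d le_rfl f (fun k h1 h2 => by omega)
  have hNge : 2 ^ (d + 1) ≤ N := by
    have := Fintype.card_le_of_surjective (fun s : Fin N => W s) (by
      intro f
      obtain ⟨s, hs, e⟩ := hU (fun k => if hk : k < d + 1 then f ⟨k, hk⟩ else false)
      refine ⟨⟨s, hs⟩, ?_⟩
      funext k
      have := e k (by omega)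
      simp only [dif_pos k.2] at this
      exact this)
    simpa using this
  have hNeq : N = 2 ^ (d + 1) := le_antisymm hNle hNge
  subst hNeq
  exact ⟨hU, hNt⟩

/-- The order lemma: the vertices `1^j 0^{d-j}` are revisited in order of increasing `j`. -/
lemma Greedy.order {d : ℕ} {a : ℕ → Bool} (h : Greedy d a) (s j : ℕ) (hs : d + 1 ≤ s)
    (hj : 2 ≤ j) (hjd : j ≤ d) (hv1 : ∀ k, k < j → a (s + k) = true)
    (hv0 : ∀ k, j ≤ k → k < d → a (s + k) = false) :
    ∃ q, d + 1 ≤ q ∧ q < s ∧ (∀ k, k < j - 1 → a (q + k) = true) ∧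
      (∀ k, j - 1 ≤ k → k < d → a (q + k) = false) := by
  have hge : ∀ x, a x = false → d ≤ x := by
    intro x hx
    by_contra hc
    rw [h.ini x (by omega)] at hx; cases hx
  have hclaim : ∀ k, k ≤ d - j + 1 → ∃ x, a x = false ∧ (∀ i, 1 ≤ i → i < j → a (x + i) = true) ∧
      (∀ i, j ≤ i → i < j + k → a (x + i) = false) ∧ x + j + k < s + d := by
    intro k
    induction k with
    | zero =>
      intro _
      -- last zero before s
      have : ∀ r, r + d + 1 ≤ s → (∀ i, s - r ≤ i → i < s → a i = true) →
          ∃ t, t < s ∧ a t = false ∧ ∀ i, t < i → i < s → a i = true := by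
        intro r hr hi
        induction hm : s - (r + d + 1) generalizing r with
        | zero =>
          exact ⟨d, by omega, h.zeros d le_rfl (by omega), fun i h1 h2 => hi i (by omega) h2⟩
        | succ q ih =>
          rcases hb : a (s - r - 1) with _ | _
          · exact ⟨s - r - 1, by omega, hb, fun i h1 h2 => hi i (by omega) h2⟩
          · apply ih (r + 1) (by omega)
            · intro i h1 h2
              rcases Nat.eq_or_lt_of_le h1 with h3 | h3
              · rw [← h3, ← hb]; congr 1
              · exact hi i (by omega) h2
            · omega
      obtain ⟨t, hts, ht0, ht1⟩ := this 0 (by omega) (fun i h1 h2 => by omega)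
      refine ⟨t, ht0, ?_, fun i h1 h2 => by omega, by omega⟩
      intro i h1 h2
      by_cases hc : t + i < s
      · exact ht1 _ (by omega) hc
      · have := hv1 (t + i - s) (by omega)
        rwa [show s + (t + i - s) = t + i by omega] at this
    | succ k ih =>
      intro hk
      obtain ⟨x, hx0, hx1, hx2, hxs⟩ := ih (by omega)
      have hxd := hge x hx0
      -- vertex start u, u + d = x + j + k
      obtain ⟨u, hu⟩ : ∃ u, u + d = x + j + k := ⟨x + j + k - d, by omega⟩
      rcases hb : a (u + d) with _ | _
      · have hz : ∀ i, j ≤ i → i < j + (k + 1) → a (x + i) = false := by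
          intro i h1 h2
          by_cases hc : i = j + k
          · rw [hc, ← add_assoc, ← hu, hb]
          · exact hx2 i h1 (by omega)
        refine ⟨x, hx0, hx1, hz, ?_⟩
        by_contra hc
        have heq : x + j + k + 1 = s + d := by omega
        rcases lt_trichotomy (k + 1) (d - j) with hl | hl | hl
        · have q1 := hx1 (j - 1) (by omega) (by omega)
          have q2 := hv0 (d - 2 - k) (by omega) (by omega)
          rw [show s + (d - 2 - k) = x + (j - 1) by omega, q1] at q2
          cases q2
        · have q2 := hv1 0 (by omega)
          rw [show s + 0 = x by omega, hx0] at q2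
          cases q2
        · have q1 := hz j (by omega) (by omega)
          have q2 := hv1 (j - 1) (by omega)
          rw [show s + (j - 1) = x + j by omega, q1] at q2
          cases q2
      · rw [h.step] at hb
        obtain ⟨m, hm, em, m0⟩ := hb
        have hux : u ≤ x := by omega
        have tr : ∀ i, i < j + k → a (m + (x - u) + i) = a (x + i) := by
          intro i hi
          have := em (x - u + i) (by omega)
          rw [add_assoc, this]
          congr 1; omega
        refine ⟨m + (x - u), ?_, ?_, ?_, by omega⟩
        · have := tr 0 (by omega)
          rw [Nat.add_zero, Nat.add_zero, hx0] at this; exact this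
        · intro i h1 h2
          rw [tr i (by omega), hx1 i h1 h2]
        · intro i h1 h2
          by_cases hc : i = j + k
          · rw [← m0]; congr 1; omega
          · rw [tr i (by omega), hx2 i h1 (by omega)]
  obtain ⟨x, hx0, hx1, hx2, hxs⟩ := hclaim (d - j + 1) le_rfl
  have hxd := hge x hx0
  refine ⟨x + 1, by omega, by omega, ?_, ?_⟩
  · intro k hk
    rw [add_assoc]; exact hx1 _ (by omega) (by omega)
  · intro k hk hkd
    rw [add_assoc]; exact hx2 _ (by omega) (by omega)

lemma Greedy.order' {d : ℕ} {a : ℕ → Bool} (h : Greedy d a) (s j : ℕ) (hs : d + 1 ≤ s)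
    (hjd : j ≤ d) (hv1 : ∀ k, k < j → a (s + k) = true)
    (hv0 : ∀ k, j ≤ k → k < d → a (s + k) = false) (i : ℕ) (hi : 1 ≤ i) (hij : i < j) :
    ∃ q, d + 1 ≤ q ∧ q < s ∧ (∀ k, k < i → a (q + k) = true) ∧
      (∀ k, i ≤ k → k < d → a (q + k) = false) ∧ a (q + d) = true := by
  induction j generalizing s with
  | zero => omega
  | succ j ih =>
    obtain ⟨q, hq, hqs, h1, h0⟩ := h.order s (j + 1) hs (by omega) hjd hv1 hv0
    rw [Nat.add_sub_cancel] at h1 h0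
    by_cases hc : i = j
    · subst hc
      refine ⟨q, hq, hqs, h1, h0, ?_⟩
      rw [h.step]
      refine ⟨d - i, by omega, ?_, h.zeros _ (by omega) (by omega)⟩
      intro k hk
      by_cases hki : k < i
      · rw [h1 k hki, h.ini _ (by omega)]
      · rw [h0 k (by omega) hk, h.zeros _ (by omega) (by omega)]
    · obtain ⟨q', a1, a2, a3⟩ := ih q hq (by omega) h1 h0 (by omega)
      exact ⟨q', a1, by omega, a3⟩

/-- Functional version of de Bruijn strings of order `d+1`. -/
structure DB (d : ℕ) (Y : ℕ → Bool) : Prop where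
  per : ∀ i, Y (i % 2 ^ (d + 1)) = Y i
  ex : ∀ f : ℕ → Bool, ∃ s, s < 2 ^ (d + 1) ∧ ∀ k, k ≤ d → Y (s + k) = f k

lemma DB.uniq' {d : ℕ} {Y : ℕ → Bool} (h : DB d Y) (s t : ℕ) (hs : s < 2 ^ (d + 1))
    (ht : t < 2 ^ (d + 1)) (e : ∀ k, k ≤ d → Y (s + k) = Y (t + k)) : s = t := by
  have hsurj : Function.Surjective
      (fun (s : Fin (2 ^ (d + 1))) (k : Fin (d + 1)) => Y (s.1 + k.1)) := by
    intro f
    obtain ⟨s, hs, e⟩ := h.ex (fun k => if hk : k < d + 1 then f ⟨k, hk⟩ else false)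
    refine ⟨⟨s, hs⟩, ?_⟩
    funext k
    have := e k (by omega)
    simp only [dif_pos k.2] at this
    exact this
  have hb := (Fintype.bijective_iff_surjective_and_card _).2 ⟨hsurj, by simp⟩
  have := @hb.1 ⟨s, hs⟩ ⟨t, ht⟩ (by
    funext k
    exact e k.1 (by omega))
  simpa using this

lemma DB.uniq {d : ℕ} {Y : ℕ → Bool} (h : DB d Y) (s t : ℕ)
    (e : ∀ k, k ≤ d → Y (s + k) = Y (t + k)) : s % 2 ^ (d + 1) = t % 2 ^ (d + 1) := by
  have hp : 0 < 2 ^ (d + 1) := by positivity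
  apply h.uniq' _ _ (Nat.mod_lt _ hp) (Nat.mod_lt _ hp)
  intro k hk
  rw [← h.per (s % _ + k), ← h.per (t % _ + k), Nat.mod_add_mod, Nat.mod_add_mod, h.per, h.per]
  exact e k hk

lemma Greedy.wrap {d : ℕ} {a : ℕ → Bool} (h : Greedy d a) (hd : 1 ≤ d) (i : ℕ)
    (hi : i < 2 ^ (d + 1) + d) : a (i % 2 ^ (d + 1)) = a i := by
  have hlt : d < 2 ^ (d + 1) := lt_trans (Nat.lt_two_pow_self) (Nat.pow_lt_pow_right (by norm_num) (by omega))
  by_cases hc : i < 2 ^ (d + 1)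
  · rw [Nat.mod_eq_of_lt hc]
  · obtain ⟨k, rfl⟩ : ∃ k, i = 2 ^ (d + 1) + k := ⟨i - 2 ^ (d + 1), by omega⟩
    rw [(h.full hd).2 k (by omega), Nat.add_mod_left, Nat.mod_eq_of_lt (by omega), h.ini k (by omega)]

lemma Greedy.db {d : ℕ} {a : ℕ → Bool} (h : Greedy d a) (hd : 1 ≤ d) :
    DB d (fun i => a ((i + d) % 2 ^ (d + 1))) := by
  have hlt : d < 2 ^ (d + 1) := lt_trans (Nat.lt_two_pow_self) (Nat.pow_lt_pow_right (by norm_num) (by omega))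
  constructor
  · intro i
    simp only [Nat.mod_add_mod]
  · intro f
    obtain ⟨s, hs, e⟩ := (h.full hd).1 f
    refine ⟨(s + (2 ^ (d + 1) - d)) % 2 ^ (d + 1), Nat.mod_lt _ (by positivity), ?_⟩
    intro k hk
    simp only [add_assoc, Nat.mod_add_mod]
    rw [← e k hk, ← h.wrap hd (s + k) (by omega),
      show s + (2 ^ (d + 1) - d + (k + d)) = s + k + 2 ^ (d + 1) by omega, Nat.add_mod_right]

lemma Greedy.least {d : ℕ} {a : ℕ → Bool} (h : Greedy d a) (hd : 2 ≤ d) {Y : ℕ → Bool}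
    (hY : DB d Y) (s : ℕ) (hs : s < 2 ^ (d + 1)) (heq : ∀ k, k < s → Y k = a (k + d))
    (hY0 : Y s = false) (ha1 : a (s + d) = true) : False := by
  have hsd : d + 1 ≤ s := by
    by_contra hc
    rw [h.zeros _ (by omega) (by omega)] at ha1
    cases ha1
  have hne : ∀ x y, x < y → y < 2 ^ (d + 1) → ¬ ∀ k, k ≤ d → Y (x + k) = Y (y + k) := by
    intro x y hxy hy e
    have := hY.uniq' x y (by omega) hy e
    omega
  have hstep := ha1
  rw [h.step] at hstep
  obtain ⟨m, hm, em, m0⟩ := hstep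
  -- p = s - d
  obtain ⟨p, rfl⟩ : ∃ p, s = p + d := ⟨s - d, by omega⟩
  have hp : ∀ k, k ≤ d → Y (p + k) = a (m + k) := by
    intro k hk
    rcases Nat.lt_or_eq_of_le hk with hk | rfl
    · rw [heq _ (by omega), em k hk]; congr 1; omega
    · rw [hY0, m0]
  by_cases hmd : d ≤ m
  · refine hne (m - d) p (by omega) (by omega) ?_
    intro k hk
    rw [hp k hk, heq _ (by omega)]; congr 1; omega
  · -- j = d - m
    have hv1 : ∀ k, k < d - m → a (p + d + k) = true := by
      intro k hk
      rw [← em k (by omega), h.ini _ (by omega)]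
    have hv0 : ∀ k, d - m ≤ k → k < d → a (p + d + k) = false := by
      intro k hk hkd
      rw [← em k (by omega), h.zeros _ (by omega) (by omega)]
    have ho := h.order' (p + d) (d - m) hsd (by omega) hv1 hv0
    have hY1 : ∀ l, l < d - m → Y (p + l) = true := by
      intro l hl
      rw [hp l (by omega), h.ini _ (by omega)]
    have hz : ∀ t, t ≤ d - m - 1 → ∀ l, d - m ≤ l → l ≤ d + t → Y (p + l) = false := by
      intro t
      induction t with
      | zero =>
        intro _ l h1 h2
        rw [hp l (by omega), h.zeros _ (by omega) (by omega)]
      | succ t ih =>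
        intro ht l h1 h2
        have ih' := ih (by omega)
        by_cases hc : l ≤ d + t
        · exact ih' l h1 hc
        · have hl : l = d + (t + 1) := by omega
          subst hl
          by_contra hb
          rw [Bool.not_eq_false] at hb
          obtain ⟨q, hq, hqs, q1, q0, qd⟩ := ho (d - m - (t + 1)) (by omega) (by omega)
          refine hne (q - d) (p + (t + 1)) (by omega) (by omega) ?_
          intro k hk
          rw [heq _ (by omega), show q - d + k + d = q + k by omega]
          rcases Nat.lt_or_eq_of_le hk with hk | rfl
          · by_cases hk2 : k < d - m - (t + 1)
            · rw [q1 k hk2, add_assoc, hY1 _ (by omega)]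
            · rw [q0 k (by omega) hk, add_assoc, ih' _ (by omega) (by omega)]
          · rw [qd, ← hb]; congr 1; omega
    have hz' := hz (d - m - 1) le_rfl
    have hY00 : ∀ k, k ≤ d → Y k = false := by
      intro k hk
      rw [heq k (by omega), h.zeros _ (by omega) (by omega)]
    have hp1 : 1 ≤ p := by omega
    have hYd : p + (d - m) + d = d + 1 ∨ Y (d + 1) = true := by
      by_cases hc : d + 1 < p + d
      · right
        rw [heq _ hc, ← h.one (by omega)]; congr 1; omega
      · -- p = 1
        exfalso
        have := hY1 0 (by omega)
        rw [hY00 _ (by omega)] at this; cases this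
    rcases hYd with hYd | hYd
    · omega
    rcases hb : Y (p + (d - m) + d) with _ | _
    · refine hne 0 (p + (d - m)) (by omega) (by omega) ?_
      intro k hk
      rw [Nat.zero_add, hY00 k hk]
      rcases Nat.lt_or_eq_of_le hk with hk | rfl
      · rw [add_assoc, hz' _ (by omega) (by omega)]
      · rw [hb]
    · refine hne 1 (p + (d - m)) (by omega) (by omega) ?_
      intro k hk
      rcases Nat.lt_or_eq_of_le hk with hk | rfl
      · rw [hY00 _ (by omega), add_assoc, hz' _ (by omega) (by omega)]
      · rw [hb, add_comm, hYd]

lemma match_iff (w z : List Bool) (i : ℕ) (hi : i + w.length ≤ z.length) :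
    (z.drop i).take w.length = w ↔ ∀ k, k < w.length → z.getD (i + k) false = w.getD k false := by
  constructor
  · intro e k hk
    have : ((z.drop i).take w.length).getD k false = w.getD k false := by rw [e]
    rw [← this]
    simp [List.getD_eq_getElem?_getD, hk]
  · intro e
    apply List.ext_getElem
    · simp; omega
    · intro k h1 h2
      have := e k h2
      rw [List.getD_eq_getElem _ _ (by omega), List.getD_eq_getElem _ _ h2] at this
      simpa using this

lemma occ_card (w z : List Bool) (hw : w.length ≤ z.length) :
    occ w z = ((Finset.range (z.length + 1 - w.length)).filter
      (fun i => ∀ k, k < w.length → z.getD (i + k) false = w.getD k false)).card := by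
  have h1 : occ w z = ((Finset.range (z.length + 1 - w.length)).filter
      (fun i => (z.drop i).take w.length = w)).card := by
    rw [occ, ← List.toFinset_card_of_nodup (List.nodup_range.filter _)]
    congr 1
    ext i
    simp
  rw [h1]
  congr 1
  apply Finset.filter_congr
  intro i hi
  rw [Finset.mem_range] at hi
  exact match_iff w z i (by omega)

/-- Periodic extension of a list with period `2^(d+1)`. -/
def pext (d : ℕ) (x : List Bool) (i : ℕ) : Bool := x.getD (i % 2 ^ (d + 1)) false

lemma d_lt (d : ℕ) : d + 1 < 2 ^ (d + 1) := Nat.lt_two_pow_self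

lemma getD_app {d : ℕ} {x : List Bool} (hx : x.length = 2 ^ (d + 1)) (i : ℕ)
    (hi : i < 2 ^ (d + 1) + d) : (x ++ x.take d).getD i false = pext d x i := by
  have hd := d_lt d
  unfold pext
  by_cases hc : i < 2 ^ (d + 1)
  · rw [List.getD_append _ _ _ _ (by omega), Nat.mod_eq_of_lt hc]
  · rw [List.getD_append_right _ _ _ _ (by omega), hx]
    rw [Nat.mod_eq_sub_mod (by omega), Nat.mod_eq_of_lt (by omega)]
    simp [List.getD_eq_getElem?_getD, show i - 2 ^ (d + 1) < d by omega]

lemma isDeBruijn_iff (d : ℕ) (x : List Bool) :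
    IsDeBruijn (d + 1) x ↔ x.length = 2 ^ (d + 1) ∧ DB d (pext d x) := by
  have hd := d_lt d
  unfold IsDeBruijn
  rw [Nat.add_sub_cancel]
  apply and_congr_right
  intro hx
  have hl : (x ++ x.take d).length = 2 ^ (d + 1) + d := by simp [hx]; omega
  have hocc : ∀ w : List Bool, w.length = d + 1 → occ w (x ++ x.take d) =
      ((Finset.range (2 ^ (d + 1))).filter
        (fun i => ∀ k, k ≤ d → pext d x (i + k) = w.getD k false)).card := by
    intro w hw
    rw [occ_card _ _ (by omega), hl, hw, show 2 ^ (d + 1) + d + 1 - (d + 1) = 2 ^ (d + 1) by omega]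
    congr 1
    apply Finset.filter_congr
    intro i hi
    rw [Finset.mem_range] at hi
    constructor
    · intro h k hk
      rw [← getD_app hx _ (by omega)]
      exact h k (by omega)
    · intro h k hk
      rw [getD_app hx _ (by omega)]
      exact h k (by omega)
  constructor
  · intro h
    refine ⟨fun i => by simp [pext], fun f => ?_⟩
    have h1 := h ((List.range (d + 1)).map f) (by simp)
    rw [hocc _ (by simp)] at h1
    have : 0 < ((Finset.range (2 ^ (d + 1))).filter
        (fun i => ∀ k, k ≤ d → pext d x (i + k) = ((List.range (d + 1)).map f).getD k false)).card := by
      omega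
    obtain ⟨s, hs⟩ := Finset.card_pos.1 this
    rw [Finset.mem_filter, Finset.mem_range] at hs
    refine ⟨s, hs.1, fun k hk => ?_⟩
    rw [hs.2 k hk, List.getD_eq_getElem _ _ (by simp; omega)]
    simp
  · intro h w hw
    rw [hocc w hw, Finset.card_eq_one]
    obtain ⟨s, hs, e⟩ := h.ex (fun k => w.getD k false)
    refine ⟨s, ?_⟩
    ext t
    rw [Finset.mem_filter, Finset.mem_range, Finset.mem_singleton]
    constructor
    · rintro ⟨ht, et⟩
      exact h.uniq' t s ht hs (fun k hk => by rw [et k hk, e k hk])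
    · rintro rfl
      exact ⟨hs, e⟩

/-- The greedy de Bruijn string. -/
noncomputable def gstr (d : ℕ) : List Bool :=
  (List.range (2 ^ (d + 1))).map (fun i => gseq d (i + d))

lemma gstr_length (d : ℕ) : (gstr d).length = 2 ^ (d + 1) := by simp [gstr]

lemma gstr_getElem (d i : ℕ) (hi : i < (gstr d).length) : (gstr d)[i] = gseq d (i + d) := by
  simp [gstr]

lemma pext_gstr (d : ℕ) (hd : 1 ≤ d) : pext d (gstr d) = fun i => gseq d ((i + d) % 2 ^ (d + 1)) := by
  funext i
  have hlt : i % 2 ^ (d + 1) < 2 ^ (d + 1) := Nat.mod_lt _ (by positivity)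
  rw [pext, List.getD_eq_getElem _ _ (by rw [gstr_length]; exact hlt), gstr_getElem]
  rw [← (gseq_greedy d).wrap hd _ (by omega), Nat.mod_add_mod]

lemma gstr_isDeBruijn (d : ℕ) (hd : 1 ≤ d) : IsDeBruijn (d + 1) (gstr d) := by
  rw [isDeBruijn_iff, pext_gstr d hd]
  exact ⟨gstr_length d, (gseq_greedy d).db hd⟩

lemma gstr_le (d : ℕ) (hd : 2 ≤ d) (y : List Bool) (hy : IsDeBruijn (d + 1) y) : gstr d ≤ y := by
  rw [isDeBruijn_iff] at hy
  obtain ⟨hl, hy⟩ := hy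
  by_contra hlt
  rw [not_le, List.lt_iff_exists] at hlt
  have hgl := gstr_length d
  rcases hlt with ⟨_, hlt⟩ | ⟨i, h1, h2, heq, hlt⟩
  · omega
  · have hpe : ∀ k, (hk : k < 2 ^ (d + 1)) → pext d y k = y[k] := by
      intro k hk
      rw [pext, Nat.mod_eq_of_lt hk, List.getD_eq_getElem]
    refine (gseq_greedy d).least hd hy i (by omega) ?_ ?_ ?_
    · intro k hk
      rw [hpe k (by omega), heq k hk, gstr_getElem]
    · rw [hpe i (by omega)]
      exact (Bool.lt_iff.1 hlt).1
    · rw [← gstr_getElem d i h2]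
      exact (Bool.lt_iff.1 hlt).2

lemma db_eq (d : ℕ) (hd : 2 ≤ d) : db (d + 1) = gstr d := by
  have h : ∃ x : List Bool, IsDeBruijn (d + 1) x ∧ ∀ y, IsDeBruijn (d + 1) y → x ≤ y :=
    ⟨gstr d, gstr_isDeBruijn d (by omega), gstr_le d hd⟩
  rw [db, dif_pos h]
  exact le_antisymm (h.choose_spec.2 _ (gstr_isDeBruijn d (by omega)))
    (gstr_le d hd _ h.choose_spec.1)

lemma flat_length (t : ℕ) (x : List Bool) : (List.replicate t x).flatten.length = t * x.length := by
  simp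

lemma flat_getD {d : ℕ} {x : List Bool} (hx : x.length = 2 ^ (d + 1)) (t i : ℕ)
    (hi : i < t * 2 ^ (d + 1)) : (List.replicate t x).flatten.getD i false = pext d x i := by
  induction t generalizing i with
  | zero => omega
  | succ t ih =>
    rw [List.replicate_succ, List.flatten_cons]
    by_cases hc : i < 2 ^ (d + 1)
    · rw [List.getD_append _ _ _ _ (by omega), pext, Nat.mod_eq_of_lt hc]
    · rw [List.getD_append_right _ _ _ _ (by omega), hx, ih _ (by rw [Nat.succ_mul] at hi; omega)]
      unfold pext
      rw [← Nat.mod_eq_sub_mod (by omega)]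

theorem stmt8 (n : ℕ) (hn : 3 ≤ n) (hodd : Odd n) :
    (∀ p : ℕ,
      ((Sodd n).drop p).take (n + 1) = [false, true] ++ List.replicate (n - 2) false ++ [true] →
      p + (n + 1) < (Sodd n).length →
      (Sodd n).getD (p + (n + 1)) false = true) ∧
    occ ([false, true] ++ List.replicate (n - 2) false ++ [true])
      (Sodd n ++ (Sodd n).take n) = n := by
  obtain ⟨d, rfl⟩ : ∃ d, n = d + 1 := ⟨n - 1, by omega⟩
  have hd : 2 ≤ d := by omega
  have hdl := d_lt d
  have hM : 2 * d + 2 ≤ 2 ^ (d + 1) := by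
    have : d < 2 ^ d := Nat.lt_two_pow_self
    rw [pow_succ]; omega
  have hG := gseq_greedy d
  have hS : Sodd (d + 1) = (List.replicate (d + 1) (gstr d)).flatten := by rw [Sodd, db_eq d hd]
  have hSl : (Sodd (d + 1)).length = (d + 1) * 2 ^ (d + 1) := by
    rw [hS, flat_length, gstr_length]
  obtain ⟨X, hX⟩ : ∃ X, X = pext d (gstr d) := ⟨_, rfl⟩
  have hSX : ∀ i, i < (d + 1) * 2 ^ (d + 1) → (Sodd (d + 1)).getD i false = X i := by
    intro i hi
    rw [hS, hX, flat_getD (gstr_length d) _ _ hi]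
  have hDB : DB d X := by rw [hX, pext_gstr d (by omega)]; exact hG.db (by omega)
  have hXg : ∀ i, i < 2 ^ (d + 1) → X i = gseq d (i + d) := by
    intro i hi
    rw [hX, pext_gstr d (by omega)]
    exact hG.wrap (by omega) _ (by omega)
  have hX0 : ∀ i, i ≤ d → X i = false := by
    intro i hi
    rw [hXg i (by omega), hG.zeros _ (by omega) (by omega)]
  have hX1 : X (d + 1) = true := by
    rw [hXg _ (by omega), show d + 1 + d = 2 * d + 1 by omega, hG.one (by omega)]
  have hX2 : X (d + 2) = false := by
    rw [hXg _ (by omega), show d + 2 + d = 2 * d + 2 by omega, hG.zero2 (by omega)]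
  have hXe : ∀ k, 1 ≤ k → k ≤ d → X (2 ^ (d + 1) - k) = true := by
    intro k h1 hk
    rw [hXg _ (by omega), show 2 ^ (d + 1) - k + d = 2 ^ (d + 1) + (d - k) by omega]
    exact (hG.full (by omega)).2 _ (by omega)
  have hper : ∀ i, X (2 ^ (d + 1) + i) = X i := by
    intro i
    rw [← hDB.per, Nat.add_mod_left, hDB.per]
  -- the word
  obtain ⟨w, hw⟩ : ∃ w, w = [false, true] ++ List.replicate (d + 1 - 2) false ++ [true] := ⟨_, rfl⟩
  have hwl : w.length = d + 2 := by rw [hw]; simp; omega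
  have hw0 : w.getD 0 false = false := by rw [hw]; simp
  have hw1 : w.getD 1 false = true := by rw [hw]; simp
  have hwz : ∀ k, 2 ≤ k → k ≤ d → w.getD k false = false := by
    intro k h1 h2
    rw [hw, List.getD_append _ _ _ _ (by simp; omega), List.getD_append_right _ _ _ _ (by simp; omega)]
    rw [List.getD_eq_getElem?_getD, List.getElem?_replicate]
    split_ifs <;> rfl
  have hwe : w.getD (d + 1) false = true := by
    rw [hw, List.getD_append_right _ _ _ _ (by simp; omega)]
    have : d + 1 - ([false, true] ++ List.replicate (d + 1 - 2) false).length = 0 := by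
      simp; omega
    rw [this]
    rfl
  rw [← hw]
  constructor
  · intro p hp hpl
    rw [show d + 1 + 1 = w.length by omega, match_iff _ _ _ (by omega)] at hp
    have hp' : ∀ k, k ≤ d + 1 → X (p + k) = w.getD k false := by
      intro k hk
      rw [← hp k (by omega), hSX _ (by omega)]
    rw [hSX _ (by omega)]
    by_contra hc
    rw [Bool.not_eq_true] at hc
    have := hDB.uniq (p + 2) 2 (by
      intro k hk
      rcases lt_trichotomy (k + 1) d with h1 | h1 | h1
      · rw [add_assoc, hp' _ (by omega), hwz _ (by omega) (by omega), hX0 _ (by omega)]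
      · rw [add_assoc, hp' _ (by omega), show 2 + k = d + 1 by omega, hwe, hX1]
      · rw [show p + 2 + k = p + (d + 1 + 1) by omega, hc, show 2 + k = d + 2 by omega, hX2])
    have h0 : p % 2 ^ (d + 1) = 0 := by
      have : p + 2 ≡ 0 + 2 [MOD 2 ^ (d + 1)] := by
        rw [Nat.zero_add]; exact this
      exact Eq.trans (Nat.ModEq.add_right_cancel' 2 this) (Nat.zero_mod _)
    have h1 := hp' 1 (by omega)
    rw [hw1, ← hDB.per, Nat.add_mod, h0, Nat.zero_add, Nat.mod_mod, hDB.per, hX0 1 (by omega)] at h1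
    cases h1
  · have hzl : (Sodd (d + 1) ++ (Sodd (d + 1)).take (d + 1)).length
        = (d + 1) * 2 ^ (d + 1) + (d + 1) := by
      rw [List.length_append, List.length_take, hSl]
      have : 2 ^ (d + 1) ≤ (d + 1) * 2 ^ (d + 1) := Nat.le_mul_of_pos_left _ (by omega)
      omega
    have hzX : ∀ i, i < (d + 1) * 2 ^ (d + 1) + (d + 1) →
        (Sodd (d + 1) ++ (Sodd (d + 1)).take (d + 1)).getD i false = X i := by
      intro i hi
      by_cases hc : i < (d + 1) * 2 ^ (d + 1)
      · rw [List.getD_append _ _ _ _ (by omega), hSX i hc]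
      · rw [List.getD_append_right _ _ _ _ (by omega), hSl]
        have hle : 2 ^ (d + 1) ≤ (d + 1) * 2 ^ (d + 1) := Nat.le_mul_of_pos_left _ (by omega)
        have : ((Sodd (d + 1)).take (d + 1)).getD (i - (d + 1) * 2 ^ (d + 1)) false
            = (Sodd (d + 1)).getD (i - (d + 1) * 2 ^ (d + 1)) false := by
          simp only [List.getD_eq_getElem?_getD, List.getElem?_take]
          rw [if_pos (by omega)]
        rw [this, hSX _ (by omega), ← hDB.per, ← hDB.per i]
        congr 1
        conv_rhs => rw [show i = (i - (d + 1) * 2 ^ (d + 1)) + (d + 1) * 2 ^ (d + 1) by omega]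
        rw [Nat.add_mul_mod_self_right]
    obtain ⟨s0, hs0, es0⟩ := hDB.ex (fun k => w.getD k false)
    have hnext : X (s0 + (d + 1)) = true := by
      by_contra hc
      rw [Bool.not_eq_true] at hc
      have := hDB.uniq (s0 + 1) (2 ^ (d + 1) - 1) (by
        intro k hk
        rcases Nat.eq_zero_or_pos k with rfl | hk0
        · rw [Nat.add_zero, Nat.add_zero (2 ^ (d + 1) - 1), es0 1 (by omega), hw1, hXe 1 le_rfl (by omega)]
        · rw [show 2 ^ (d + 1) - 1 + k = 2 ^ (d + 1) + (k - 1) by omega, hper, hX0 (k - 1) (by omega)]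
          rcases Nat.lt_or_eq_of_le hk with h1 | h1
          · rw [add_assoc, es0 _ (by omega), hwz _ (by omega) (by omega)]
          · rw [h1, ← hc]; congr 1; omega)
      rw [Nat.mod_eq_of_lt (by omega : 2 ^ (d + 1) - 1 < 2 ^ (d + 1))] at this
      have h0 := es0 0 (by omega)
      rw [hw0, Nat.add_zero] at h0
      by_cases hc2 : s0 + 1 < 2 ^ (d + 1)
      · rw [Nat.mod_eq_of_lt hc2] at this
        rw [show s0 = 2 ^ (d + 1) - 2 by omega, hXe 2 (by omega) hd] at h0
        cases h0
      · rw [show s0 + 1 = 2 ^ (d + 1) by omega, Nat.mod_self] at this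
        omega
    have hle : 2 ^ (d + 1) ≤ (d + 1) * 2 ^ (d + 1) := Nat.le_mul_of_pos_left _ (by omega)
    rw [occ_card _ _ (by rw [hzl, hwl]; omega), hzl, hwl]
    have hset : ((Finset.range ((d + 1) * 2 ^ (d + 1) + (d + 1) + 1 - (d + 2))).filter
        (fun i => ∀ k, k < d + 2 →
          (Sodd (d + 1) ++ (Sodd (d + 1)).take (d + 1)).getD (i + k) false = w.getD k false))
        = (Finset.range (d + 1)).image (fun t => s0 + t * 2 ^ (d + 1)) := by
      ext i
      rw [Finset.mem_filter, Finset.mem_range, Finset.mem_image,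
        show (d + 1) * 2 ^ (d + 1) + (d + 1) + 1 - (d + 2) = (d + 1) * 2 ^ (d + 1) by omega]
      constructor
      · rintro ⟨hi, e⟩
        have := hDB.uniq i s0 (by
          intro k hk
          rw [es0 k hk, ← e k (by omega), hzX _ (by omega)])
        rw [Nat.mod_eq_of_lt hs0] at this
        refine ⟨i / 2 ^ (d + 1), ?_, ?_⟩
        · rw [Finset.mem_range]
          exact Nat.div_lt_of_lt_mul (by rw [mul_comm]; exact hi)
        · rw [← this, mul_comm]
          exact Nat.mod_add_div _ _
      · rintro ⟨t, ht, rfl⟩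
        rw [Finset.mem_range] at ht
        have hlt : s0 + t * 2 ^ (d + 1) < (d + 1) * 2 ^ (d + 1) := by
          have : (t + 1) * 2 ^ (d + 1) ≤ (d + 1) * 2 ^ (d + 1) := Nat.mul_le_mul_right _ (by omega)
          rw [Nat.succ_mul] at this
          omega
        refine ⟨hlt, ?_⟩
        intro k hk
        rw [hzX _ (by omega), ← hDB.per, show s0 + t * 2 ^ (d + 1) + k = s0 + k + t * 2 ^ (d + 1) by ring,
          Nat.add_mul_mod_self_right, hDB.per]
        by_cases hkd : k ≤ d
        · exact es0 k hkd
        · rw [show k = d + 1 by omega, hnext, hwe]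
    rw [hset, Finset.card_image_of_injective, Finset.card_range]
    intro t t' e
    have hp : 0 < 2 ^ (d + 1) := by positivity
    simp only [Nat.add_left_cancel_iff] at e
    exact Nat.eq_of_mul_eq_mul_right hp e
end

section
/- For every odd n ≥ 3 and every binary string w with |w| ≥ n, all occurrences of w as a substring of S_n = db(n)^n that have a following bit inside S_n are followed by the same bit. -/
theorem flat_get (x : List Bool) (m i : ℕ) (hi : i < m * x.length) :
    ((List.replicate m x).flatten)[i]? = x[i % x.length]? := by
  induction m generalizing i with
  | zero => simp at hi
  | succ k ih =>
    rw [List.replicate_succ, List.flatten_cons]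
    by_cases h : i < x.length
    · rw [List.getElem?_append_left h, Nat.mod_eq_of_lt h]
    · have h' : x.length ≤ i := by omega
      rw [List.getElem?_append_right h', ih, ← Nat.mod_eq_sub_mod h']
      rw [Nat.succ_mul] at hi
      omega

theorem ext_get (x : List Bool) (m i : ℕ) (hm : m ≤ x.length) (hi : i < x.length + m) :
    (x ++ x.take m)[i]? = x[i % x.length]? := by
  by_cases h : i < x.length
  · rw [List.getElem?_append_left h, Nat.mod_eq_of_lt h]
  · have h' : x.length ≤ i := by omega
    rw [List.getElem?_append_right h', List.getElem?_take_of_lt (by omega),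
      Nat.mod_eq_sub_mod h', Nat.mod_eq_of_lt (by omega)]

theorem occ_unique (w x : List Bool) (h : occ w x = 1) (a b : ℕ)
    (ha : a < x.length + 1 - w.length) (hb : b < x.length + 1 - w.length)
    (ha' : (x.drop a).take w.length = w) (hb' : (x.drop b).take w.length = w) : a = b := by
  unfold occ at h
  obtain ⟨c, hc⟩ := List.length_eq_one_iff.mp h
  have h1 : a ∈ [c] := by rw [← hc]; simp [ha, ha']
  have h2 : b ∈ [c] := by rw [← hc]; simp [hb, hb']
  simp at h1 h2
  rw [h1, h2]

theorem occ_shift (n : ℕ) (hn : 3 ≤ n) (x w : List Bool) (hx : x.length = 2 ^ n)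
    (hw : n ≤ w.length) (p : ℕ)
    (hp : (((List.replicate n x).flatten).drop p).take w.length = w)
    (hp' : p + w.length < n * x.length) :
    ((x ++ x.take (n - 1)).drop (p % x.length)).take (w.take n).length = w.take n := by
  have hlt : n < x.length := by rw [hx]; exact Nat.lt_two_pow_self
  have hm : p % x.length < x.length := Nat.mod_lt _ (by omega)
  have hl : (w.take n).length = n := by simp [hw]
  rw [hl]
  conv_rhs => rw [← hp]
  apply List.ext_getElem?
  intro i
  by_cases hi : i < n
  · rw [List.getElem?_take_of_lt hi, List.getElem?_take_of_lt hi,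
      List.getElem?_take_of_lt (by omega), List.getElem?_drop, List.getElem?_drop,
      ext_get _ _ _ (by omega) (by omega), flat_get _ _ _ (by omega), Nat.mod_add_mod]
  · rw [List.getElem?_take_eq_none (by omega), List.getElem?_take_eq_none (by omega)]

/-- For every odd `n ≥ 3` and every `w` with `|w| ≥ n`, all occurrences of `w` in
`S_n = db(n)^n` that have a following bit inside `S_n` are followed by the same bit. -/
theorem stmt9 (n : ℕ) (hn : 3 ≤ n) (hodd : Odd n) (w : List Bool) (hw : n ≤ w.length)
    (p q : ℕ)
    (hp : ((Sodd n).drop p).take w.length = w) (hp' : p + w.length < (Sodd n).length)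
    (hq : ((Sodd n).drop q).take w.length = w) (hq' : q + w.length < (Sodd n).length) :
    (Sodd n).getD (p + w.length) false = (Sodd n).getD (q + w.length) false := by
  have hdb : db n = [] ∨ IsDeBruijn n (db n) := by
    unfold db
    split_ifs with h
    · exact Or.inr h.choose_spec.1
    · exact Or.inl rfl
  rcases hdb with h | h
  · simp [Sodd, h] at hp'
  obtain ⟨hx, hocc⟩ := h
  unfold Sodd at *
  generalize db n = x at *
  have hlen : ((List.replicate n x).flatten).length = n * x.length := by simp
  rw [hlen] at hp' hq'
  have hlt : n < x.length := by rw [hx]; exact Nat.lt_two_pow_self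
  have hl : (w.take n).length = n := by simp [hw]
  have hl2 : (x ++ x.take (n - 1)).length = x.length + (n - 1) := by
    rw [List.length_append, List.length_take]; omega
  have hmp : p % x.length < x.length := Nat.mod_lt _ (by omega)
  have hmq : q % x.length < x.length := Nat.mod_lt _ (by omega)
  have key : p % x.length = q % x.length :=
    occ_unique (w.take n) _ (hocc _ hl) _ _ (by omega) (by omega)
      (occ_shift n hn x w hx hw p hp hp') (occ_shift n hn x w hx hw q hq hq')
  rw [List.getD_eq_getElem?_getD, List.getD_eq_getElem?_getD, flat_get _ _ _ hp',
    flat_get _ _ _ hq', ← Nat.mod_add_mod p, key, Nat.mod_add_mod]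
end

section
/- For every n ≥ 2, the string 1^n does not occur as a substring of the finite string S_1 S_2 ··· S_{n−1}. -/
def GF (n : ℕ) (w : List Bool) : Prop :=
  (w = [] ∨ ∃ v, w = false :: v) ∧ ¬ (List.replicate n true <:+: w)

lemma two_word {n : ℕ} {a b : List Bool}
    (ha : ¬ (List.replicate n true <:+: a)) (hb : GF n b) :
    ¬ (List.replicate n true <:+: a ++ b) := by
  obtain ⟨h0, hb⟩ := hb
  rcases h0 with rfl | ⟨v, rfl⟩
  · simpa using ha
  rintro ⟨s, u, h⟩
  rw [List.append_assoc] at h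
  rcases List.append_eq_append_iff.1 h with ⟨c, rfl, h2⟩ | ⟨c, rfl, h2⟩
  · rcases List.append_eq_append_iff.1 h2 with ⟨d, rfl, h3⟩ | ⟨d, h3, h4⟩
    · exact ha ⟨s, d, by simp⟩
    · cases d with
      | nil => 
        apply ha
        simp at h3
        exact ⟨s, [], by simp [h3]⟩
      | cons e d =>
        simp at h4
        have : e ∈ List.replicate n true := by rw [h3]; simp
        rw [List.mem_replicate] at this
        simp_all
  · exact hb ⟨c, u, by rw [h2]; simp⟩

lemma GF_flatten {n : ℕ} (hn : 1 ≤ n) (L : List (List Bool)) (h : ∀ w ∈ L, GF n w) :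
    GF n L.flatten := by
  induction L with
  | nil =>
    refine ⟨Or.inl rfl, ?_⟩
    simp; omega
  | cons a L ih =>
    have h1 := h a (by simp)
    have h2 := ih (fun w hw => h w (by simp [hw]))
    refine ⟨?_, two_word h1.2 h2⟩
    rcases h1.1 with rfl | ⟨v, rfl⟩
    · simpa using h2.1
    · right; exact ⟨v ++ L.flatten, by simp⟩

lemma occ_eq {m : ℕ} (hm : 1 ≤ m) {x w : List Bool} (hx : x.length = 2 ^ m) (hw : w.length = m) :
    occ w (x ++ x.take (m - 1)) =
      (List.range (2 ^ m)).countP (fun i => decide ((x.rotate i).take m = w)) := by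
  have hlt : m < 2 ^ m := Nat.lt_two_pow_self
  unfold occ
  rw [List.countP_eq_length_filter]
  have hl : (x ++ x.take (m - 1)).length + 1 - w.length = 2 ^ m := by
    simp [hx, hw]; omega
  rw [hl]
  congr 1
  apply List.filter_congr
  intro i hi
  rw [List.mem_range] at hi
  rw [List.rotate_eq_drop_append_take (by omega), hw]
  have : (List.drop i (x ++ x.take (m - 1))).take m = (x.drop i ++ x.take i).take m := by
    rw [List.drop_append_of_le_length (by omega), List.take_append, List.take_append,
      List.take_take, List.take_take]
    congr 2
    simp [hx]
    omega
  rw [this]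

lemma countP_shift (P : ℕ → Bool) (N : ℕ) (h : P N = P 0) :
    (List.range N).countP (fun i => P (i + 1)) = (List.range N).countP P := by
  have h1 : (List.range (N + 1)).countP P = (List.range N).countP P + (if P N then 1 else 0) := by
    rw [List.range_succ, List.countP_append, List.countP_singleton]
  have h2 : (List.range (N + 1)).countP P =
      (List.range N).countP (fun i => P (i + 1)) + (if P 0 then 1 else 0) := by
    rw [List.range_succ_eq_map, List.countP_cons, List.countP_map]; rfl
  rw [h] at h1
  omega

lemma deBruijn_rotate_one {m : ℕ} (hm : 1 ≤ m) {x : List Bool} (hx : IsDeBruijn m x) :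
    IsDeBruijn m (x.rotate 1) := by
  obtain ⟨hl, h⟩ := hx
  refine ⟨by simpa using hl, fun w hw => ?_⟩
  have h1 := h w hw
  rw [occ_eq hm hl hw] at h1
  have h2 := countP_shift (fun i => decide ((x.rotate i).take m = w)) (2 ^ m)
    (by simp only [← hl, List.rotate_length, List.rotate_zero])
  rw [occ_eq hm (by simpa using hl) hw]
  simp only [List.rotate_rotate, Nat.add_comm 1]
  exact h2.trans h1

lemma deBruijn_rotate {m : ℕ} (hm : 1 ≤ m) {x : List Bool} (hx : IsDeBruijn m x) (k : ℕ) :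
    IsDeBruijn m (x.rotate k) := by
  induction k with
  | zero => simpa using hx
  | succ k ih => rw [← List.rotate_rotate]; exact deBruijn_rotate_one hm ih

lemma prefix_zero (m : ℕ) : ∀ (x r : List Bool), m ≤ x.length →
    x ≤ List.replicate m false ++ r → ∃ v, x = List.replicate m false ++ v := by
  induction m with
  | zero => intro x r _ _; exact ⟨x, by simp⟩
  | succ m ih =>
    intro x r hl hle
    cases x with
    | nil => simp at hl
    | cons b x =>
      rw [List.replicate_succ, List.cons_append] at hle
      cases b with
      | true =>
        exact absurd (List.Lex.rel (by decide)) (not_lt.2 hle)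
      | false =>
        have hle : x ≤ List.replicate m false ++ r := by
          rw [← not_lt] at hle ⊢
          exact fun hc => hle (List.Lex.cons hc)
        obtain ⟨v, rfl⟩ := ih x r (by simpa using hl) hle
        exact ⟨v, by simp [List.replicate_succ]⟩

lemma no_ones {m : ℕ} {x : List Bool} (hx : IsDeBruijn m x) :
    ¬ (List.replicate (m + 1) true <:+: x) := by
  rintro ⟨p, q, h⟩
  obtain ⟨hl, ho⟩ := hx
  have := ho (List.replicate m true) (by simp)
  unfold occ at this
  obtain ⟨a, ha⟩ := List.length_eq_one_iff.1 this
  have key : ∀ j ≤ 1, p.length + j = a := by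
    intro j hj
    rw [← List.mem_singleton, ← ha, List.mem_filter]
    constructor
    · rw [← h]; simp; omega
    · rw [← h]
      simp only [decide_eq_true_eq, List.length_replicate, List.append_assoc]
      rw [List.drop_append, List.drop_eq_nil_of_le (by omega), List.nil_append,
        Nat.add_sub_cancel_left, List.drop_append_of_le_length (by simp; omega),
        List.take_append_of_le_length (by simp; omega)]
      simp; omega
  have h0 := key 0 (by omega)
  have h1 := key 1 (by omega)
  omega

lemma db_GF {m n i : ℕ} (hm : 1 ≤ m) (hn : m + 1 ≤ n) (hi : i < m) :
    GF n ((db m).rotate i) := by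
  unfold db
  split_ifs with h
  · obtain ⟨hx, hmin⟩ := h.choose_spec
    generalize h.choose = x at hx hmin
    have hlt : m < 2 ^ m := Nat.lt_two_pow_self
    have h1 := hx.2 (List.replicate m false) (by simp)
    rw [occ_eq hm hx.1 (by simp)] at h1
    have h2 : 0 < (List.range (2 ^ m)).countP
      (fun i => decide ((x.rotate i).take m = List.replicate m false)) := by omega
    obtain ⟨k, -, hk⟩ := List.countP_pos_iff.1 h2
    have hk := of_decide_eq_true hk
    have hle := hmin _ (deBruijn_rotate hm hx k)
    rw [← List.take_append_drop m (x.rotate k), hk] at hle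
    obtain ⟨v, hv⟩ := prefix_zero m x _ (by rw [hx.1]; omega) hle
    obtain ⟨d, rfl⟩ : ∃ d, m = i + (d + 1) := ⟨m - i - 1, by omega⟩
    have hno : ¬ (List.replicate n true <:+: x) := by
      intro hc
      refine no_ones hx (List.IsInfix.trans ?_ hc)
      exact ⟨[], List.replicate (n - (i + (d + 1) + 1)) true, by
        rw [List.nil_append, ← List.replicate_add]; congr 1; omega⟩
    have hz : ∀ j, GF n (List.replicate j false) := by
      intro j
      constructor
      · cases j with
        | zero => left; rfl
        | succ j => right; exact ⟨_, List.replicate_succ⟩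
      · intro hc
        have := hc.subset (a := true) (by simp; omega)
        simp at this
    have hr : x.rotate i = (List.replicate (d + 1) false ++ v) ++ List.replicate i false := by
      rw [hv, List.replicate_add, List.append_assoc]
      have := List.rotate_append_length_eq (List.replicate i false)
        (List.replicate (d + 1) false ++ v)
      simpa using this
    rw [hr]
    constructor
    · right
      exact ⟨_, by rw [List.replicate_succ, List.cons_append, List.cons_append]⟩
    · apply two_word _ (hz i)
      intro hc
      apply hno
      rw [hv, List.replicate_add, List.append_assoc]
      exact hc.trans (List.suffix_append _ _).isInfix
  · refine ⟨by simp, ?_⟩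
    simp; omega

/-- For every `n ≥ 2`, the string `1^n` does not occur as a substring of
`S_1 S_2 ⋯ S_{n-1}`. -/
theorem stmt11 (n : ℕ) (hn : 2 ≤ n) :
    ¬ (List.replicate n true <:+: Sfin (n - 1)) := by
  have hn1 : 1 ≤ n := by omega
  refine (GF_flatten hn1 _ ?_).2
  intro w hw
  obtain ⟨k, hk, rfl⟩ := List.mem_map.1 hw
  rw [List.mem_range] at hk
  refine GF_flatten hn1 _ ?_
  intro w hw
  obtain ⟨i, hi, rfl⟩ := List.mem_map.1 hw
  rw [List.mem_range] at hi
  refine GF_flatten hn1 _ ?_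
  intro w hw
  rw [(List.mem_replicate.1 hw).2]
  have := Nat.ordProj_le 2 (n := k + 1) (by omega)
  exact db_GF (by omega) (by omega) (by omega)
end

section
/- For all sufficiently large n, every binary string w with |w| ≥ n−1 occurs at most n² times as a substring of the finite string S_1 S_2 ··· S_n, i.e., occ(w, S_1S_2···S_n) ≤ n². -/
theorem lex_zero (m : ℕ) : ∀ x y : List Bool, m ≤ x.length → x ≤ y →
    (∀ j, j < m → y[j]? = some false) → ∀ j, j < m → x[j]? = some false := by
  induction m with
  | zero => intro x y _ _ _ j hj; omega
  | succ m ih =>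
    intro x y hx hxy hy j hj
    cases x with
    | nil => simp at hx
    | cons a x =>
      cases y with
      | nil => have := hy 0 (by omega); simp at this
      | cons b y =>
        have hb : b = false := by have := hy 0 (by omega); simpa using this
        subst hb
        have ha : a = false ∧ x ≤ y := by
          rw [← not_lt] at hxy
          cases a with
          | true => exact absurd (List.Lex.rel (by decide)) hxy
          | false =>
            refine ⟨rfl, ?_⟩
            rw [← not_lt]
            exact fun h => hxy (List.Lex.cons h)
        cases j with
        | zero => simp [ha.1]
        | succ j =>
          have := ih x y (by simpa using hx) ha.2
            (fun j hj => by have := hy (j+1) (by omega); simpa using this) j (by omega)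
          simpa using this

/-- `v` is the cyclic window of length `m` of `x` starting at `j`. -/
def Win (m : ℕ) (x : List Bool) (j : ℕ) (v : List Bool) : Prop :=
  ∀ k, k < m → x[(j + k) % 2 ^ m]? = v[k]?

theorem win_iff (m : ℕ) (hm : 1 ≤ m) (x v : List Bool) (hx : x.length = 2 ^ m) (hv : v.length = m)
    (j : ℕ) (hj : j < 2 ^ m) :
    ((x ++ x.take (m - 1)).drop j).take v.length = v ↔ Win m x j v := by
  have hmL : m < 2 ^ m := Nat.lt_two_pow_self
  have key : ∀ k, k < m → (x ++ x.take (m - 1))[j + k]? = x[(j + k) % 2 ^ m]? := by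
    intro k hk
    by_cases h : j + k < 2 ^ m
    · rw [List.getElem?_append_left (by omega), Nat.mod_eq_of_lt h]
    · rw [List.getElem?_append_right (by omega), List.getElem?_take, if_pos (by omega), hx,
        Nat.mod_eq_sub_mod (by omega), Nat.mod_eq_of_lt (by omega)]
  constructor
  · intro h k hk
    rw [← key k hk]
    conv_rhs => rw [← h]
    rw [List.getElem?_take, if_pos (by omega), List.getElem?_drop]
  · intro h
    apply List.ext_getElem?
    intro k
    rw [List.getElem?_take]
    split
    · rename_i hk
      rw [List.getElem?_drop, key k (by omega), h k (by omega)]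
    · rename_i hk
      rw [List.getElem?_eq_none (by omega)]

theorem db_iff (m : ℕ) (hm : 1 ≤ m) (x : List Bool) :
    IsDeBruijn m x ↔ x.length = 2 ^ m ∧ ∀ v : List Bool, v.length = m →
      ∃ j, j < 2 ^ m ∧ Win m x j v ∧ ∀ j', j' < 2 ^ m → Win m x j' v → j' = j := by
  have hmL : m < 2 ^ m := Nat.lt_two_pow_self
  unfold IsDeBruijn
  refine and_congr_right fun hx => forall_congr' fun v => forall_congr' fun hv => ?_
  have e : occ v (x ++ x.take (m - 1)) = ((Finset.range (2 ^ m)).filter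
      (fun i => ((x ++ x.take (m - 1)).drop i).take v.length = v)).card := by
    have h1 : (x ++ x.take (m - 1)).length + 1 - v.length = 2 ^ m := by
      simp [hx, hv]; omega
    unfold occ
    rw [h1]
    rfl
  rw [e, Finset.card_eq_one]
  constructor
  · rintro ⟨j, hj⟩
    have hj1 : j ∈ ({j} : Finset ℕ) := by simp
    rw [← hj, Finset.mem_filter, Finset.mem_range] at hj1
    refine ⟨j, hj1.1, (win_iff m hm x v hx hv j hj1.1).1 hj1.2, fun j' h1 h2 => ?_⟩
    have : j' ∈ ({j} : Finset ℕ) := by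
      rw [← hj, Finset.mem_filter, Finset.mem_range]
      exact ⟨h1, (win_iff m hm x v hx hv j' h1).2 h2⟩
    simpa using this
  · rintro ⟨j, h1, h2, h3⟩
    refine ⟨j, ?_⟩
    ext i
    rw [Finset.mem_filter, Finset.mem_range, Finset.mem_singleton]
    constructor
    · rintro ⟨a, b⟩
      exact h3 i a ((win_iff m hm x v hx hv i a).1 b)
    · rintro rfl
      exact ⟨h1, (win_iff m hm x v hx hv i h1).2 h2⟩

theorem win_rotate (m : ℕ) (x v : List Bool) (hx : x.length = 2 ^ m) (r j : ℕ) :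
    Win m (x.rotate r) j v ↔ Win m x ((j + r) % 2 ^ m) v := by
  have hL : 0 < 2 ^ m := by positivity
  unfold Win
  refine forall_congr' fun k => forall_congr' fun hk => ?_
  rw [List.getElem?_rotate (by rw [hx]; exact Nat.mod_lt _ hL), hx]
  have : ((j + k) % 2 ^ m + r) % 2 ^ m = ((j + r) % 2 ^ m + k) % 2 ^ m := by
    rw [Nat.mod_add_mod, Nat.mod_add_mod]; congr 1; omega
  rw [this]

theorem db_rotate (m : ℕ) (hm : 1 ≤ m) (x : List Bool) (h : IsDeBruijn m x) (r : ℕ)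
    (hr : r < 2 ^ m) : IsDeBruijn m (x.rotate r) := by
  rw [db_iff m hm] at h ⊢
  refine ⟨by simp [h.1], fun v hv => ?_⟩
  obtain ⟨j, h1, h2, h3⟩ := h.2 v hv
  have hL : 0 < 2 ^ m := by positivity
  have e : ((j + (2 ^ m - r)) % 2 ^ m + r) % 2 ^ m = j := by
    rw [Nat.mod_add_mod, show j + (2 ^ m - r) + r = j + 2 ^ m by omega, Nat.add_mod_right,
      Nat.mod_eq_of_lt h1]
  refine ⟨(j + (2 ^ m - r)) % 2 ^ m, Nat.mod_lt _ hL, ?_, ?_⟩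
  · rw [win_rotate m x v h.1, e]; exact h2
  · intro j' h4 h5
    rw [win_rotate m x v h.1] at h5
    have := h3 _ (Nat.mod_lt _ hL) h5
    have e2 : (j' + r) % 2 ^ m = ((j + (2 ^ m - r)) % 2 ^ m + r) % 2 ^ m := by rw [e, this]
    have e3 : j' ≡ (j + (2 ^ m - r)) % 2 ^ m [MOD 2 ^ m] := Nat.ModEq.add_right_cancel' r e2
    exact Nat.ModEq.eq_of_lt_of_lt e3 h4 (Nat.mod_lt _ hL)

/-- What we need about `db m`. -/
theorem db_cases (m : ℕ) (hm : 1 ≤ m) : db m = [] ∨ ((db m).length = 2 ^ m ∧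
    (∀ j, j < m → (db m)[j]? = some false) ∧
    ∀ (v : List Bool) (j j' : ℕ), v.length = m → Win m (db m) j v → Win m (db m) j' v →
      j % 2 ^ m = j' % 2 ^ m) := by
  have hmL : m < 2 ^ m := Nat.lt_two_pow_self
  have hL : 0 < 2 ^ m := by positivity
  unfold db
  split
  · rename_i h
    right
    obtain ⟨h1, h2⟩ := h.choose_spec
    generalize h.choose = x at h1 h2
    have h1' := (db_iff m hm x).1 h1
    obtain ⟨hx, h3⟩ := h1'
    refine ⟨hx, ?_, ?_⟩
    · obtain ⟨r, hr, h4, -⟩ := h3 (List.replicate m false) (by simp)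
      have h5 := h2 _ (db_rotate m hm x h1 r hr)
      refine lex_zero m x _ (by omega) h5 ?_
      intro j hj
      rw [List.getElem?_rotate (by omega), hx, Nat.add_comm, h4 j hj]
      simp [hj]
    · intro v j j' hv h4 h5
      obtain ⟨r, hr, -, h6⟩ := h3 v hv
      have red : ∀ j, Win m x j v → Win m x (j % 2 ^ m) v := by
        intro j h k hk
        rw [Nat.mod_add_mod]; exact h k hk
      rw [h6 _ (Nat.mod_lt _ hL) (red _ h4), h6 _ (Nat.mod_lt _ hL) (red _ h5)]
  · left; rfl

/-- number of occurrences of `u` in `A ++ T` starting inside `A` -/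
def pc (u A T : List Bool) : ℕ :=
  ((Finset.range A.length).filter (fun p => u <+: (A ++ T).drop p)).card

theorem pc_append (u A B T : List Bool) : pc u (A ++ B) T = pc u A (B ++ T) + pc u B T := by
  unfold pc
  rw [List.length_append, Finset.card_filter, Finset.card_filter, Finset.card_filter,
    Finset.sum_range_add]
  congr 1
  · simp only [List.append_assoc]
  · apply Finset.sum_congr rfl
    intro p _
    rw [List.append_assoc, List.drop_append, List.drop_of_length_le (by omega)]
    simp

theorem pc_mono (u u' A T : List Bool) (h : u' <+: u) : pc u A T ≤ pc u' A T := by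
  apply Finset.card_le_card
  intro p hp
  rw [Finset.mem_filter] at hp ⊢
  exact ⟨hp.1, h.trans hp.2⟩

theorem occ_le_pc (w X : List Bool) (hw : 1 ≤ w.length) : occ w X ≤ pc w X [] := by
  have : occ w X = ((Finset.range (X.length + 1 - w.length)).filter
      (fun i => (X.drop i).take w.length = w)).card := rfl
  rw [this]
  apply Finset.card_le_card
  intro p hp
  rw [Finset.mem_filter, Finset.mem_range] at hp ⊢
  refine ⟨by omega, ?_⟩
  rw [List.append_nil, ← hp.2]
  simpa using List.take_prefix _ _

theorem pc_nil (u T : List Bool) : pc u [] T = 0 := by simp [pc]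

theorem pc_split (u A : List Bool) :
    pc u A [] ≤ pc (u ++ [false]) A [] + pc (u ++ [true]) A [] + 1 := by
  unfold pc
  have : (Finset.range A.length).filter (fun p => u <+: (A ++ []).drop p) ⊆
    ((Finset.range A.length).filter (fun p => u ++ [false] <+: (A ++ []).drop p) ∪
    (Finset.range A.length).filter (fun p => u ++ [true] <+: (A ++ []).drop p)) ∪
     {A.length - u.length} := by
    intro p hp
    rw [Finset.mem_filter, Finset.mem_range, List.append_nil] at hp
    obtain ⟨hp, r, hr⟩ := hp
    simp only [Finset.mem_union, Finset.mem_filter, Finset.mem_range, Finset.mem_singleton,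
      List.append_nil]
    cases r with
    | nil =>
      right
      have := congrArg List.length hr
      simp at this
      omega
    | cons b r =>
      left
      cases b
      · left; exact ⟨hp, r, by simpa using hr⟩
      · right; exact ⟨hp, r, by simpa using hr⟩
  refine (Finset.card_le_card this).trans ((Finset.card_union_le _ _).trans ?_)
  have := Finset.card_union_le
    ((Finset.range A.length).filter (fun p => u ++ [false] <+: (A ++ []).drop p))
    ((Finset.range A.length).filter (fun p => u ++ [true] <+: (A ++ []).drop p))
  simp only [Finset.card_singleton]
  omega

theorem flat_get_s13 (L : ℕ) (y : List Bool) (hy : y.length = L) (t : ℕ) :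
    (List.replicate t y).flatten.length = t * L ∧
    ∀ q, q < t * L → (List.replicate t y).flatten[q]? = y[q % L]? := by
  induction t with
  | zero => simp
  | succ t ih =>
    refine ⟨by simp [hy], fun q hq => ?_⟩
    rw [List.replicate_succ, List.flatten_cons]
    by_cases h : q < L
    · rw [List.getElem?_append_left (by omega), Nat.mod_eq_of_lt h]
    · rw [List.getElem?_append_right (by omega), hy, ih.2 (q - L) (by
        rw [Nat.succ_mul] at hq; omega), ← Nat.mod_eq_sub_mod (by omega)]

/-- Occurrences starting in the regular part of a block. -/
theorem reg_card (L t c : ℕ) (s : Finset ℕ) (hs : ∀ q ∈ s, q < t * L)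
    (h : ∀ q ∈ s, ∀ q' ∈ s, (c + q) % L = (c + q') % L) : s.card ≤ t := by
  have : s.card ≤ (Finset.range t).card := by
    apply Finset.card_le_card_of_injOn (fun q => q / L)
    · intro q hq
      have := hs q hq
      simp only [Finset.coe_range, Set.mem_Iio]
      exact Nat.div_lt_of_lt_mul (by rwa [Nat.mul_comm])
    · intro q hq q' hq' e
      have e1 : q ≡ q' [MOD L] := Nat.ModEq.add_left_cancel' c (h q hq q' hq')
      have a := Nat.div_add_mod q L
      have b := Nat.div_add_mod q' L
      simp only at e
      rw [e, e1] at a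
      omega
  simpa using this

theorem pre_get (v X : List Bool) (p : ℕ) (h : v <+: X.drop p) (j : ℕ) (hj : j < v.length) :
    X[p + j]? = v[j]? := by
  obtain ⟨r, hr⟩ := h
  rw [← List.getElem?_drop, ← hr, List.getElem?_append_left hj]

theorem cross_hi (m : ℕ) (x : List Bool)
    (hz : ∀ j, j < m → x[j]? = some false)
    (hm : 1 ≤ m) (i t : ℕ) (A T v : List Bool) (hv : v.length = m) (him : i < m)
    (hA : A.length = t * 2 ^ m) (hAq : ∀ q, q < t * 2 ^ m → A[q]? = x[(i + q) % 2 ^ m]?)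
    (hT : ∀ j b, i + 1 + j < m → T[j]? = some b → b = false)
    (ht : 1 ≤ t) (k : ℕ) (hk : i < k) (hkm : k < m)
    (h : v <+: (A ++ T).drop (t * 2 ^ m - k)) : Win m x (i + 2 ^ m - k) v := by
  have hmL : m < 2 ^ m := Nat.lt_two_pow_self
  have htL : 2 ^ m ≤ t * 2 ^ m := Nat.le_mul_of_pos_left _ ht
  intro j hj
  have g := pre_get v _ _ h j (by omega)
  by_cases hjk : j < k
  · rw [List.getElem?_append_left (by omega), hAq _ (by omega)] at g
    rw [← g]
    congr 1
    have e : i + (t * 2 ^ m - k + j) = i + 2 ^ m - k + j + (t - 1) * 2 ^ m := by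
      rw [Nat.sub_mul]; omega
    rw [e, Nat.add_mul_mod_self_right]
  · rw [List.getElem?_append_right (by omega)] at g
    have hvj : v[j]? = some v[j] := List.getElem?_eq_getElem (by omega)
    rw [hvj] at g ⊢
    rw [← hT _ _ (by omega) g.symm.symm] at hz
    have e : (i + 2 ^ m - k + j) % 2 ^ m = i + j - k := by
      rw [show i + 2 ^ m - k + j = (i + j - k) + 2 ^ m by omega, Nat.add_mod_right,
        Nat.mod_eq_of_lt (by omega)]
    rw [e]
    exact hz _ (by omega)

theorem cross_lo (m : ℕ) (x : List Bool)
    (hz : ∀ j, j < m → x[j]? = some false)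
    (hm : 1 ≤ m) (i t : ℕ) (A T v : List Bool) (hv : v.length = m) (him : i < m)
    (hA : A.length = t * 2 ^ m) (hAq : ∀ q, q < t * 2 ^ m → A[q]? = x[(i + q) % 2 ^ m]?)
    (hT : ∀ j b, j < m → T[j]? = some b → x[(i + 1 + j) % 2 ^ m]? = some b)
    (ht : 1 ≤ t) (k : ℕ) (hk : k ≤ i) (hk1 : 1 ≤ k)
    (h : v <+: (A ++ T).drop (t * 2 ^ m - k)) : Win m x (i - k + 1) v := by
  have hmL : m < 2 ^ m := Nat.lt_two_pow_self
  have htL : 2 ^ m ≤ t * 2 ^ m := Nat.le_mul_of_pos_left _ ht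
  intro j hj
  have g := pre_get v _ _ h j (by omega)
  by_cases hjk : j < k
  · rw [List.getElem?_append_left (by omega), hAq _ (by omega)] at g
    rw [← g]
    have e : i + (t * 2 ^ m - k + j) = i - k + j + t * 2 ^ m := by omega
    rw [e, Nat.add_mul_mod_self_right, Nat.mod_eq_of_lt (by omega), Nat.mod_eq_of_lt (by omega),
      hz _ (by omega), hz _ (by omega)]
  · rw [List.getElem?_append_right (by omega)] at g
    have hvj : v[j]? = some v[j] := List.getElem?_eq_getElem (by omega)
    rw [hvj] at g ⊢
    rw [← hT _ _ (by omega) g]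
    congr 2
    omega

/-- splitting a block into regular and crossing starts -/
theorem block_split (m : ℕ) (x : List Bool)
    (hinj : ∀ (v : List Bool) (j j' : ℕ), v.length = m → Win m x j v → Win m x j' v →
      j % 2 ^ m = j' % 2 ^ m)
    (i t : ℕ) (A T v : List Bool) (hv : v.length = m)
    (hA : A.length = t * 2 ^ m) (hAq : ∀ q, q < t * 2 ^ m → A[q]? = x[(i + q) % 2 ^ m]?) :
    pc v A T ≤ t + ((Finset.Ico 1 m).filter
      (fun k => k ≤ t * 2 ^ m ∧ v <+: (A ++ T).drop (t * 2 ^ m - k))).card := by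
  classical
  unfold pc
  rw [← Finset.card_filter_add_card_filter_not (fun q => q + m ≤ t * 2 ^ m)]
  apply Nat.add_le_add
  · apply reg_card (2 ^ m) t i
    · intro q hq
      simp only [Finset.mem_filter, Finset.mem_range] at hq
      omega
    · have W : ∀ q ∈ ((Finset.range A.length).filter (fun p => v <+: (A ++ T).drop p)).filter
          (fun q => q + m ≤ t * 2 ^ m), Win m x (i + q) v := by
        intro q hq j hj
        simp only [Finset.mem_filter, Finset.mem_range] at hq
        have g := pre_get v _ _ hq.1.2 j (by omega)
        rw [List.getElem?_append_left (by omega), hAq _ (by omega)] at g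
        rw [← g, Nat.add_assoc]
      intro q hq q' hq'
      exact hinj v _ _ hv (W q hq) (W q' hq')
  · apply Finset.card_le_card_of_injOn (fun q => t * 2 ^ m - q)
    · intro q hq
      simp only [Finset.coe_filter, Finset.mem_filter, Finset.mem_range, Set.mem_ofPred_eq,
        Finset.mem_Ico] at hq ⊢
      refine ⟨by omega, by omega, ?_⟩
      rw [show t * 2 ^ m - (t * 2 ^ m - q) = q by omega]
      exact hq.1.2
    · intro q hq q' hq' e
      simp only [Finset.coe_filter, Finset.mem_filter, Finset.mem_range, Set.mem_ofPred_eq] at hq hq' e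
      omega

theorem block_inner (m : ℕ) (x : List Bool)
    (hz : ∀ j, j < m → x[j]? = some false)
    (hinj : ∀ (v : List Bool) (j j' : ℕ), v.length = m → Win m x j v → Win m x j' v →
      j % 2 ^ m = j' % 2 ^ m)
    (hm : 1 ≤ m) (i t : ℕ) (A T v : List Bool) (hv : v.length = m) (him : i < m)
    (hA : A.length = t * 2 ^ m) (hAq : ∀ q, q < t * 2 ^ m → A[q]? = x[(i + q) % 2 ^ m]?)
    (hT : ∀ j b, j < m → T[j]? = some b → x[(i + 1 + j) % 2 ^ m]? = some b)
    (ht : 1 ≤ t) : pc v A T ≤ t + 1 := by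
  have hmL : m < 2 ^ m := Nat.lt_two_pow_self
  refine (block_split m x hinj i t A T v hv hA hAq).trans (Nat.add_le_add_left ?_ _)
  have hT' : ∀ j b, i + 1 + j < m → T[j]? = some b → b = false := by
    intro j b hj hb
    have := hT j b (by omega) hb
    rw [Nat.mod_eq_of_lt (by omega), hz _ hj] at this
    simpa using this.symm
  have W : ∀ k, 1 ≤ k → k < m → v <+: (A ++ T).drop (t * 2 ^ m - k) →
      Win m x (if k ≤ i then i - k + 1 else i + 2 ^ m - k) v := by
    intro k h1 h2 h3
    split
    · exact cross_lo m x hz hm i t A T v hv him hA hAq hT ht k (by omega) h1 h3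
    · exact cross_hi m x hz hm i t A T v hv him hA hAq hT' ht k (by omega) h2 h3
  rw [Finset.card_le_one]
  intro a ha b hb
  simp only [Finset.mem_filter, Finset.mem_Ico] at ha hb
  have e := hinj v _ _ hv (W a ha.1.1 ha.1.2 ha.2.2) (W b hb.1.1 hb.1.2 hb.2.2)
  rw [Nat.mod_eq_of_lt (by split <;> omega), Nat.mod_eq_of_lt (by split <;> omega)] at e
  split at e <;> split at e <;> omega

theorem block_last (m : ℕ) (x : List Bool)
    (hz : ∀ j, j < m → x[j]? = some false)
    (hinj : ∀ (v : List Bool) (j j' : ℕ), v.length = m → Win m x j v → Win m x j' v →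
      j % 2 ^ m = j' % 2 ^ m)
    (hm : 1 ≤ m) (i t : ℕ) (A T v : List Bool) (hv : v.length = m) (him : i < m)
    (hA : A.length = t * 2 ^ m) (hAq : ∀ q, q < t * 2 ^ m → A[q]? = x[(i + q) % 2 ^ m]?)
    (hT : ∀ j b, i + 1 + j < m → T[j]? = some b → b = false)
    (ht : 1 ≤ t) : pc v A T ≤ t + (1 + i) := by
  classical
  have hmL : m < 2 ^ m := Nat.lt_two_pow_self
  refine (block_split m x hinj i t A T v hv hA hAq).trans (Nat.add_le_add_left ?_ _)
  rw [← Finset.card_filter_add_card_filter_not (fun k => i < k)]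
  apply Nat.add_le_add
  · rw [Finset.card_le_one]
    intro a ha b hb
    simp only [Finset.mem_filter, Finset.mem_Ico] at ha hb
    have e := hinj v _ _ hv
      (cross_hi m x hz hm i t A T v hv him hA hAq hT ht a ha.2 ha.1.1.2 ha.1.2.2)
      (cross_hi m x hz hm i t A T v hv him hA hAq hT ht b hb.2 hb.1.1.2 hb.1.2.2)
    rw [Nat.mod_eq_of_lt (by omega), Nat.mod_eq_of_lt (by omega)] at e
    omega
  · have : ∀ s : Finset ℕ, s ⊆ Finset.Icc 1 i → s.card ≤ i := fun s hs => by
      simpa using Finset.card_le_card hs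
    apply this
    intro k hk
    simp only [Finset.mem_filter, Finset.mem_Ico, Finset.mem_Icc] at hk ⊢
    omega

theorem oddPart_mul (m : ℕ) : 2 ^ (m.factorization 2) * oddPart m = m :=
  Nat.ordProj_mul_ordCompl_eq_self m 2

noncomputable def blocks (m t K : ℕ) : List Bool :=
  ((List.range K).map (fun i => Bblk m t i)).flatten

theorem blocks_succ (m t K : ℕ) : blocks m t (K + 1) = blocks m t K ++ Bblk m t K := by
  simp [blocks, List.range_succ]

/-- `T` is empty or starts with `m` zeros -/
def Good (m : ℕ) (T : List Bool) : Prop := T = [] ∨ ∀ j, j < m → T[j]? = some false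

theorem Bblk_spec (m t i : ℕ) (hx : (db m).length = 2 ^ m) :
    (Bblk m t i).length = t * 2 ^ m ∧
    ∀ q, q < t * 2 ^ m → (Bblk m t i)[q]? = (db m)[(i + q) % 2 ^ m]? := by
  have hL : 0 < 2 ^ m := by positivity
  obtain ⟨h1, h2⟩ := flat_get_s13 (2 ^ m) ((db m).rotate i) (by simp [hx]) t
  refine ⟨h1, fun q hq => ?_⟩
  unfold Bblk
  rw [h2 q hq, List.getElem?_rotate (by rw [hx]; exact Nat.mod_lt _ hL), hx, Nat.mod_add_mod,
    Nat.add_comm]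

theorem blocks_le (m t : ℕ) (hm : 1 ≤ m) (ht : 1 ≤ t) (hx : (db m).length = 2 ^ m)
    (hz : ∀ j, j < m → (db m)[j]? = some false)
    (hinj : ∀ (v : List Bool) (j j' : ℕ), v.length = m → Win m (db m) j v → Win m (db m) j' v →
      j % 2 ^ m = j' % 2 ^ m) (v : List Bool) (hv : v.length = m) (K : ℕ) :
    ∀ T : List Bool, K ≤ m →
    (∀ j b, j < m → T[j]? = some b → (db m)[(K + j) % 2 ^ m]? = some b) →
    pc v (blocks m t K) T ≤ K * (t + 1) := by
  have hmL : m < 2 ^ m := Nat.lt_two_pow_self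
  have htL : 2 ^ m ≤ t * 2 ^ m := Nat.le_mul_of_pos_left _ ht
  induction K with
  | zero => intro T _ _; simp [blocks, pc]
  | succ K ih =>
    intro T hK hT
    obtain ⟨s1, s2⟩ := Bblk_spec m t K hx
    rw [blocks_succ, pc_append, Nat.succ_mul]
    apply Nat.add_le_add
    · apply ih _ (by omega)
      intro j b hj hb
      rwa [List.getElem?_append_left (by omega), s2 _ (by omega)] at hb
    · exact block_inner m (db m) hz hinj hm K t _ T v hv (by omega) s1 s2 hT ht

theorem Sblk_le (m : ℕ) (hm : 1 ≤ m) (T : List Bool) (hT : Good m T) (v : List Bool)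
    (hv : v.length = m) : pc v (Sblk m) T ≤ m + 2 * 2 ^ (m.factorization 2) := by
  have hmL : m < 2 ^ m := Nat.lt_two_pow_self
  have hS : Sblk m = blocks m (oddPart m) (2 ^ (m.factorization 2)) := rfl
  have hmul := oddPart_mul m
  rw [hS]
  rcases db_cases m hm with h | ⟨hx, hz, hinj⟩
  · have : blocks m (oddPart m) (2 ^ (m.factorization 2)) = [] := by
      simp [blocks, Bblk, h]
    rw [this, pc_nil]; omega
  · generalize oddPart m = t at *
    generalize 2 ^ (m.factorization 2) = K at *
    have ht : 1 ≤ t := by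
      rcases Nat.eq_zero_or_pos t with h | h
      · subst h; omega
      · exact h
    have hKm : K ≤ m := by rw [← hmul]; exact Nat.le_mul_of_pos_right _ ht
    have htL : 2 ^ m ≤ t * 2 ^ m := Nat.le_mul_of_pos_left _ ht
    cases K with
    | zero => simp [blocks, pc]
    | succ K =>
      obtain ⟨s1, s2⟩ := Bblk_spec m t K hx
      rw [blocks_succ, pc_append]
      have a := blocks_le m t hm ht hx hz hinj v hv K (Bblk m t K ++ T) (by omega) (by
        intro j b hj hb
        rwa [List.getElem?_append_left (by omega), s2 _ (by omega)] at hb)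
      have b := block_last m (db m) hz hinj hm K t (Bblk m t K) T v hv (by omega) s1 s2 (by
        intro j b hj hb
        rcases hT with rfl | hT
        · simp at hb
        · rw [hT j (by omega)] at hb; simpa using hb.symm) ht
      nlinarith

theorem Good_step (m : ℕ) (T : List Bool) (hT : Good (m + 1) T) :
    Good m (Sblk (m + 1) ++ T) := by
  have hmul := oddPart_mul (m + 1)
  have hS : Sblk (m + 1) = blocks (m + 1) (oddPart (m + 1)) (2 ^ ((m + 1).factorization 2)) := rfl
  rw [hS]
  rcases db_cases (m + 1) (by omega) with h | ⟨hx, hz, -⟩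
  · have : blocks (m + 1) (oddPart (m + 1)) (2 ^ ((m + 1).factorization 2)) = [] := by
      simp [blocks, Bblk, h]
    rw [this]
    rcases hT with rfl | hT
    · left; rfl
    · right; intro j hj; exact hT j (by omega)
  · right
    generalize oddPart (m + 1) = t at *
    generalize 2 ^ ((m + 1).factorization 2) = K at *
    have ht : 1 ≤ t := by
      rcases Nat.eq_zero_or_pos t with h | h
      · subst h; omega
      · exact h
    have hmL : m + 1 < 2 ^ (m + 1) := Nat.lt_two_pow_self
    have htL : 2 ^ (m + 1) ≤ t * 2 ^ (m + 1) := Nat.le_mul_of_pos_left _ ht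
    cases K with
    | zero => omega
    | succ K =>
      intro j hj
      obtain ⟨s1, s2⟩ := Bblk_spec (m + 1) t 0 hx
      have : blocks (m + 1) t (K + 1) = Bblk (m + 1) t 0 ++
          ((List.range K).map (fun i => Bblk (m + 1) t (i + 1))).flatten := by
        simp [blocks, List.range_succ_eq_map, Function.comp_def]
      rw [this, List.append_assoc, List.getElem?_append_left (by omega), s2 _ (by omega),
        Nat.zero_add, Nat.mod_eq_of_lt (by omega), hz _ (by omega)]

theorem Sfin_succ (m : ℕ) : Sfin (m + 1) = Sfin m ++ Sblk (m + 1) := by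
  simp [Sfin, List.range_succ]

theorem Sfin_le (w : List Bool) (m : ℕ) : ∀ T, m ≤ w.length → Good m T →
    pc w (Sfin m) T ≤ ∑ k ∈ Finset.range m, (k + 1 + 2 * 2 ^ ((k + 1).factorization 2)) := by
  induction m with
  | zero => intro T _ _; simp [Sfin, pc]
  | succ m ih =>
    intro T hw hT
    rw [Sfin_succ, pc_append, Finset.sum_range_succ]
    apply Nat.add_le_add
    · exact ih _ (by omega) (Good_step m T hT)
    · refine (pc_mono w (w.take (m + 1)) _ _ (List.take_prefix _ _)).trans ?_
      exact Sblk_le (m + 1) (by omega) T hT _ (by simp; omega)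

theorem sum_pow_le (n : ℕ) :
    ∑ k ∈ Finset.range n, 2 ^ ((k + 1).factorization 2) ≤ n * (Nat.log 2 n + 1) := by
  have h1 : ∀ k ∈ Finset.range n, 2 ^ ((k + 1).factorization 2) ≤
      ∑ j ∈ Finset.range (Nat.log 2 n + 1), if 2 ^ j ∣ k + 1 then 2 ^ j else 0 := by
    intro k hk
    rw [Finset.mem_range] at hk
    have hd : 2 ^ ((k + 1).factorization 2) ∣ k + 1 := Nat.ordProj_dvd (k + 1) 2
    have hle : 2 ^ ((k + 1).factorization 2) ≤ n := (Nat.le_of_dvd (by omega) hd).trans (by omega)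
    have hmem : (k + 1).factorization 2 ∈ Finset.range (Nat.log 2 n + 1) := by
      rw [Finset.mem_range]
      exact Nat.lt_succ_of_le (Nat.le_log_of_pow_le (by norm_num) hle)
    have := Finset.single_le_sum (f := fun j => if 2 ^ j ∣ k + 1 then 2 ^ j else 0)
      (fun _ _ => Nat.zero_le _) hmem
    simpa [hd] using this
  refine (Finset.sum_le_sum h1).trans ?_
  rw [Finset.sum_comm]
  have h2 : ∀ j ∈ Finset.range (Nat.log 2 n + 1),
      (∑ k ∈ Finset.range n, if 2 ^ j ∣ k + 1 then 2 ^ j else 0) ≤ n := by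
    intro j _
    rw [← Finset.sum_filter, Finset.sum_const, Nat.card_multiples, smul_eq_mul]
    exact Nat.div_mul_le_self n _
  refine (Finset.sum_le_sum h2).trans ?_
  simp [Nat.mul_comm]

theorem log_bound (n : ℕ) (hn : 128 ≤ n) : 16 * (Nat.log 2 n + 1) ≤ n := by
  have h1 : 2 ^ Nat.log 2 n ≤ n := Nat.pow_log_le_self 2 (by omega)
  have h2 : 7 ≤ Nat.log 2 n := Nat.le_log_of_pow_le (by norm_num) (by omega)
  have h3 : ∀ l, 7 ≤ l → 16 * (l + 1) ≤ 2 ^ l := by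
    intro l hl
    induction l, hl using Nat.le_induction with
    | base => norm_num
    | succ l hl ih => rw [pow_succ]; omega
  exact (h3 _ h2).trans h1

/-- For all sufficiently large `n`, every `w` with `|w| ≥ n - 1` occurs at most `n²`
times as a substring of `S_1 S_2 ⋯ S_n`. -/
theorem stmt13 :
    ∃ N : ℕ, ∀ n, N ≤ n → ∀ w : List Bool, n - 1 ≤ w.length →
      occ w (Sfin n) ≤ n ^ 2 := by
  refine ⟨128, fun n hn w hw => ?_⟩
  obtain ⟨m, rfl⟩ : ∃ m, n = m + 1 := ⟨n - 1, by omega⟩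
  have hw' : m ≤ w.length := by omega
  refine (occ_le_pc w _ (by omega)).trans ?_
  rw [Sfin_succ, pc_append]
  have a := Sfin_le w m (Sblk (m + 1) ++ []) hw' (Good_step m [] (Or.inl rfl))
  have b := (pc_mono w (w.take m) (Sblk (m + 1)) [] (List.take_prefix _ _)).trans
    (pc_split (w.take m) (Sblk (m + 1)))
  have c := fun z => Sblk_le (m + 1) (by omega) [] (Or.inl rfl) (w.take m ++ [z])
    (by simp; omega)
  have c1 := c false
  have c2 := c true
  have d := sum_pow_le (m + 1)
  have e := log_bound (m + 1) hn
  have f : 2 ^ ((m + 1).factorization 2) ≤ m + 1 :=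
    Nat.le_of_dvd (by omega) (Nat.ordProj_dvd (m + 1) 2)
  rw [Finset.sum_range_succ] at d
  rw [Finset.sum_add_distrib, ← Finset.mul_sum] at a
  have g : (∑ k ∈ Finset.range m, (k + 1)) * 2 = (m + 1) * m := by
    have := Finset.sum_range_id_mul_two (m + 1)
    rw [Finset.sum_range_succ'] at this
    simpa using this
  have h : 16 * ((m + 1) * (Nat.log 2 (m + 1) + 1)) ≤ (m + 1) * (m + 1) := by
    calc _ = (m + 1) * (16 * (Nat.log 2 (m + 1) + 1)) := by ring
      _ ≤ _ := Nat.mul_le_mul_left _ e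
  have i : 128 * (m + 1) ≤ (m + 1) * (m + 1) := Nat.mul_le_mul_right _ hn
  have j : (m + 1) * (m + 1) = (m + 1) * m + (m + 1) := by ring
  rw [pow_two]
  omega
end

section
/- Let Z = Z_1 Z_2 Z_3 ··· be an infinite binary sequence where, for each n ≥ 1, Z_n is a binary string of length n·2^n in which every binary string of length n occurs exactly once at a starting position divisible by n (i.e., Z_n is an enumeration of all binary strings of length n in aligned blocks). Then Z is normal: for every nonempty binary string w, the limit as m → ∞ of occ(w, Z↾m)/m equals 2^{−|w|}. -/
open Finset

/-- indicator that `w` occurs in `u` at position `t` -/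
def ind (w : List Bool) (u : ℕ → Bool) (t : ℕ) : ℝ :=
  if ∀ j < w.length, u (t + j) = w.getD j false then 1 else 0

/-- centred indicator -/
noncomputable def cen (w : List Bool) (u : ℕ → Bool) (t : ℕ) : ℝ :=
  ind w u t - (2 ^ w.length : ℝ)⁻¹

def ext0 {N : ℕ} (v : Fin N → Bool) (x : ℕ) : Bool := if h : x < N then v ⟨x, h⟩ else false

lemma abs_cen_le (w : List Bool) (u : ℕ → Bool) (t : ℕ) : |cen w u t| ≤ 1 := by
  have h1 : (0:ℝ) < (2 ^ w.length : ℝ)⁻¹ := by positivity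
  have h2 : (2 ^ w.length : ℝ)⁻¹ ≤ 1 := inv_le_one_of_one_le₀ (one_le_pow₀ (by norm_num))
  unfold cen ind
  rw [abs_le]
  split_ifs <;> constructor <;> linarith

/-- counting functions with prescribed values on a set of coordinates -/
lemma card_prescribed {N : ℕ} (A : Finset (Fin N)) (u : Fin N → Bool) :
    (((univ : Finset (Fin N → Bool)).filter (fun v => ∀ a ∈ A, v a = u a)).card : ℝ)
      = 2 ^ N * (2 ^ A.card : ℝ)⁻¹ := by
  have h : (univ : Finset (Fin N → Bool)).filter (fun v => ∀ a ∈ A, v a = u a)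
      = Fintype.piFinset (fun a => if a ∈ A then {u a} else univ) := by
    ext v
    simp only [mem_filter, mem_univ, true_and, Fintype.mem_piFinset]
    refine forall_congr' fun a => ?_
    by_cases ha : a ∈ A <;> simp [ha]
  rw [h, Fintype.card_piFinset]
  have h2 : ∀ a, ((if a ∈ A then ({u a} : Finset Bool) else univ).card) = if a ∈ A then 1 else 2 := by
    intro a; split_ifs <;> simp
  simp only [h2]
  rw [Finset.prod_ite]
  simp only [prod_const, one_pow, one_mul]
  have h3 : (univ.filter (fun a => a ∉ A)).card + A.card = N := by
    have := Finset.card_filter_add_card_filter_not (s := (univ : Finset (Fin N))) (fun a => a ∈ A)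
    simp at this ⊢
    omega
  push_cast
  rw [eq_mul_inv_iff_mul_eq₀ (by positivity), ← pow_add, h3]

lemma ind_sum_gen {N : ℕ} (P : (Fin N → Bool) → Prop) [DecidablePred P] (A : Finset ℕ)
    (hA : ∀ a ∈ A, a < N) (u : ℕ → Bool)
    (hP : ∀ v, P v ↔ ∀ a ∈ A, ext0 v a = u a) :
    ∑ v : Fin N → Bool, (if P v then (1:ℝ) else 0) = 2 ^ N * (2 ^ A.card : ℝ)⁻¹ := by
  have hc : (A.attachFin hA).card = A.card := by simp
  rw [← hc, ← card_prescribed (A.attachFin hA) (fun a => u a), Finset.sum_boole]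
  congr 2
  ext v
  simp only [mem_filter, mem_univ, true_and, hP, Finset.mem_attachFin]
  constructor
  · intro h a ha
    have := h a ha
    simpa [ext0] using this
  · intro h a ha
    have := h ⟨a, hA a ha⟩ ha
    simpa [ext0, hA a ha] using this

lemma sum_ind (w : List Bool) {N t : ℕ} (ht : t + w.length ≤ N) :
    ∑ v : Fin N → Bool, ind w (ext0 v) t = 2 ^ N * (2 ^ w.length : ℝ)⁻¹ := by
  unfold ind
  rw [ind_sum_gen _ (Finset.Ico t (t + w.length)) (by simp; omega) (fun x => w.getD (x - t) false)]
  · simp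
  · intro v
    constructor
    · intro h a ha
      simp only [mem_Ico] at ha
      have := h (a - t) (by omega)
      rwa [show t + (a - t) = a by omega] at this
    · intro h j hj
      have := h (t + j) (by simp; omega)
      simpa using this

lemma sum_ind_mul (w : List Bool) {N t s : ℕ} (hts : t + w.length ≤ s) (hs : s + w.length ≤ N) :
    ∑ v : Fin N → Bool, ind w (ext0 v) t * ind w (ext0 v) s
      = 2 ^ N * (2 ^ w.length : ℝ)⁻¹ * (2 ^ w.length : ℝ)⁻¹ := by
  have hd : Disjoint (Finset.Ico t (t + w.length)) (Finset.Ico s (s + w.length)) := by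
    rw [Finset.disjoint_left]; intro a; simp; omega
  unfold ind
  simp only [← ite_and, mul_ite, mul_one, mul_zero]
  rw [ind_sum_gen _ (Finset.Ico t (t + w.length) ∪ Finset.Ico s (s + w.length))
    (by intro a; simp; omega)
    (fun x => if x < s then w.getD (x - t) false else w.getD (x - s) false)]
  · rw [Finset.card_union_of_disjoint hd]
    simp [pow_add]
    ring
  · intro v
    constructor
    · rintro ⟨h2, h1⟩ a ha
      simp only [mem_union, mem_Ico] at ha
      by_cases hlt : a < s
      · have := h1 (a - t) (by omega)
        rw [show t + (a - t) = a by omega] at this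
        simpa [hlt] using this
      · have := h2 (a - s) (by omega)
        rw [show s + (a - s) = a by omega] at this
        simpa [hlt] using this
    · intro h
      constructor
      · intro j hj
        have := h (s + j) (by simp; omega)
        simpa using this
      · intro j hj
        have := h (t + j) (by simp; omega)
        rw [if_pos (by omega)] at this
        simpa using this

lemma sum_cen_mul (w : List Bool) {N t s : ℕ} (hts : t + w.length ≤ s) (hs : s + w.length ≤ N) :
    ∑ v : Fin N → Bool, cen w (ext0 v) t * cen w (ext0 v) s = 0 := by
  unfold cen
  have : ∀ v : Fin N → Bool, (ind w (ext0 v) t - (2 ^ w.length : ℝ)⁻¹) *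
      (ind w (ext0 v) s - (2 ^ w.length : ℝ)⁻¹) = ind w (ext0 v) t * ind w (ext0 v) s
      - (2 ^ w.length : ℝ)⁻¹ * ind w (ext0 v) t - (2 ^ w.length : ℝ)⁻¹ * ind w (ext0 v) s
      + (2 ^ w.length : ℝ)⁻¹ * (2 ^ w.length : ℝ)⁻¹ := by intro v; ring
  simp only [this, Finset.sum_add_distrib, Finset.sum_sub_distrib, ← Finset.mul_sum]
  rw [sum_ind_mul w hts hs, sum_ind w (by omega), sum_ind w hs]
  simp
  ring

/-- centred number of occurrences inside a block -/
noncomputable def gsum (w : List Bool) (N : ℕ) (u : ℕ → Bool) : ℝ :=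
  ∑ t ∈ range (N + 1 - w.length), cen w u t

lemma second_moment (w : List Bool) (N : ℕ) (hw : 1 ≤ w.length) :
    ∑ v : Fin N → Bool, (gsum w N (ext0 v)) ^ 2 ≤ 2 ^ N * (2 * w.length * N) := by
  set k := w.length with hk
  have h1 : ∀ v : Fin N → Bool, (gsum w N (ext0 v)) ^ 2
      = ∑ t ∈ range (N + 1 - k), ∑ s ∈ range (N + 1 - k), cen w (ext0 v) t * cen w (ext0 v) s := by
    intro v
    rw [pow_two, gsum, Finset.sum_mul_sum]
  simp only [h1]
  rw [Finset.sum_comm]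
  have h2 : ∀ t ∈ range (N + 1 - k), ∑ v : Fin N → Bool, ∑ s ∈ range (N + 1 - k),
      cen w (ext0 v) t * cen w (ext0 v) s ≤ 2 ^ N * (2 * k) := by
    intro t ht
    rw [Finset.sum_comm]
    have h3 : ∀ s ∈ range (N + 1 - k), ∑ v : Fin N → Bool, cen w (ext0 v) t * cen w (ext0 v) s
        ≤ if s ∈ Ico (t + 1 - k) (t + k) then (2:ℝ) ^ N else 0 := by
      intro s hs
      simp only [mem_range] at hs ht
      split_ifs with hin
      · calc ∑ v : Fin N → Bool, cen w (ext0 v) t * cen w (ext0 v) s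
            ≤ ∑ v : Fin N → Bool, (1:ℝ) := by
              refine Finset.sum_le_sum fun v _ => ?_
              refine (le_abs_self _).trans ?_
              rw [abs_mul]
              exact mul_le_one₀ (abs_cen_le _ _ _) (abs_nonneg _) (abs_cen_le _ _ _)
          _ = 2 ^ N := by simp
      · simp only [mem_Ico, not_and_or, not_le, not_lt] at hin
        rcases hin with h | h
        · simp only [mul_comm (cen w _ t)]
          rw [sum_cen_mul w (by omega) (by omega)]
        · rw [sum_cen_mul w (by omega) (by omega)]
    refine (Finset.sum_le_sum h3).trans ?_
    rw [← Finset.sum_filter, Finset.sum_const, nsmul_eq_mul, mul_comm]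
    refine mul_le_mul_of_nonneg_left ?_ (by positivity)
    have h4 : ((range (N + 1 - k)).filter (fun s => s ∈ Ico (t + 1 - k) (t + k))).card ≤ 2 * k := by
      calc _ ≤ (Ico (t + 1 - k) (t + k)).card := by
              refine Finset.card_le_card fun s hs => ?_
              exact (mem_filter.1 hs).2
        _ ≤ 2 * k := by simp; omega
    exact_mod_cast h4
  refine (Finset.sum_le_sum h2).trans ?_
  rw [Finset.sum_const, nsmul_eq_mul, card_range]
  have h5 : ((N + 1 - k : ℕ) : ℝ) ≤ N := by exact_mod_cast (by omega)
  have h6 : (0:ℝ) ≤ 2 ^ N * (2 * k) := by positivity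
  nlinarith [mul_le_mul_of_nonneg_right h5 h6]

lemma first_moment (w : List Bool) (N : ℕ) (hw : 1 ≤ w.length) :
    ∑ v : Fin N → Bool, |gsum w N (ext0 v)| ≤ 2 ^ N * (2 * w.length * √N) := by
  apply abs_le_of_sq_le_sq' _ (by positivity) |>.2
  have h := sq_sum_le_card_mul_sum_sq (s := (univ : Finset (Fin N → Bool)))
    (f := fun v => |gsum w N (ext0 v)|)
  simp only [sq_abs] at h
  refine h.trans ?_
  have h2 := second_moment w N hw
  have hc : (((univ : Finset (Fin N → Bool)).card : ℕ) : ℝ) = 2 ^ N := by simp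
  rw [hc]
  refine (mul_le_mul_of_nonneg_left h2 (by positivity)).trans ?_
  have h3 : √(N:ℝ) ^ 2 = N := Real.sq_sqrt (by positivity)
  have hk : (1:ℝ) ≤ w.length := by exact_mod_cast hw
  calc (2:ℝ) ^ N * (2 ^ N * (2 * w.length * N)) = (2 ^ N) ^ 2 * N * (2 * w.length) := by ring
    _ ≤ (2 ^ N) ^ 2 * N * (4 * w.length ^ 2) := by
      refine mul_le_mul_of_nonneg_left ?_ (by positivity)
      nlinarith
    _ = _ := by rw [mul_pow, mul_pow, h3]; ring

lemma block_close (w : List Bool) (N : ℕ) (hw : 1 ≤ w.length) (u u' : ℕ → Bool)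
    (huu : ∀ t < N, u t = u' t) :
    |∑ t ∈ range N, cen w u t| ≤ |gsum w N u'| + w.length := by
  have h1 : gsum w N u' = gsum w N u := by
    unfold gsum cen ind
    refine Finset.sum_congr rfl fun t ht => ?_
    simp only [mem_range] at ht
    congr 2
    simp only [eq_iff_iff]
    refine forall_congr' fun j => forall_congr' fun hj => ?_
    rw [huu (t + j) (by omega)]
  rw [h1, gsum, ← Finset.sum_range_add_sum_Ico _ (show N + 1 - w.length ≤ N by omega)]
  refine (abs_add_le _ _).trans (add_le_add le_rfl ?_)
  refine (Finset.abs_sum_le_sum_abs _ _).trans ?_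
  refine (Finset.sum_le_sum fun t _ => abs_cen_le w u t).trans ?_
  simp only [sum_const, Nat.card_Ico, nsmul_eq_mul, mul_one]
  exact_mod_cast (by omega)

/-- start of the `n`-th (from zero) stage -/
def stA (n : ℕ) : ℕ := ∑ r ∈ range n, (r + 1) * 2 ^ (r + 1)

lemma stA_succ (n : ℕ) : stA (n + 1) = stA n + (n + 1) * 2 ^ (n + 1) := by
  simp [stA, Finset.sum_range_succ]

lemma le_stA (n : ℕ) : n ≤ stA n := by
  induction n with
  | zero => simp
  | succ n ih =>
    rw [stA_succ]
    have : 1 ≤ (n + 1) * 2 ^ (n + 1) := Nat.mul_pos (by omega) (by positivity)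
    omega

lemma stA_mono : Monotone stA := monotone_nat_of_le_succ fun n => by rw [stA_succ]; omega

lemma mul_le_stA (n : ℕ) : n * 2 ^ n ≤ stA n := by
  cases n with
  | zero => simp
  | succ n => rw [stA_succ]; omega

lemma flatten_getD (f : ℕ → List Bool) (k t : ℕ) (ht : t < (f k).length) (N : ℕ) (hN : k < N) :
    (((List.range N).map f).flatten).getD ((((List.range k).map f).flatten).length + t) false
      = (f k).getD t false := by
  induction N with
  | zero => omega
  | succ N ih =>
    rw [List.range_succ, List.map_append, List.flatten_append]
    rcases Nat.lt_or_ge k N with h | h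
    · rw [List.getD_append, ih h]
      have : ((List.range (k+1)).map f).flatten.length ≤ ((List.range N).map f).flatten.length := by
        obtain ⟨d, rfl⟩ := Nat.exists_eq_add_of_le (show k + 1 ≤ N by omega)
        rw [show List.range (k + 1 + d) = List.range (k + 1) ++ (List.range d).map (fun x => k + 1 + x)
          from List.range_add, List.map_append, List.flatten_append, List.length_append]
        exact Nat.le_add_right _ _
      rw [List.range_succ, List.map_append, List.flatten_append, List.length_append] at this
      simp at this ⊢
      omega
    · have : k = N := by omega
      subst this
      rw [List.getD_append_right _ _ _ _ (by omega)]
      simp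

lemma Z_eq (Z : ℕ → Bool) (Zn : ℕ → List Bool)
    (hlen : ∀ n, 1 ≤ n → (Zn n).length = n * 2 ^ n)
    (hZ : ∀ i : ℕ,
      Z i = (((List.range (i + 1)).map (fun k => Zn (k + 1))).flatten).getD i false)
    (n t : ℕ) (ht : t < (n + 1) * 2 ^ (n + 1)) :
    Z (stA n + t) = (Zn (n + 1)).getD t false := by
  have hl : ∀ k, (((List.range k).map (fun k => Zn (k + 1))).flatten).length = stA k := by
    intro k
    induction k with
    | zero => simp [stA]
    | succ k ih =>
      rw [List.range_succ, List.map_append, List.flatten_append, List.length_append, ih, stA_succ]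
      simp [hlen]
  rw [hZ, ← hl n]
  refine flatten_getD (fun k => Zn (k + 1)) n t ?_ _ ?_
  · rw [hlen _ (by omega)]; exact ht
  · rw [hl]
    have := le_stA n
    omega

lemma take_drop_getD (x w : List Bool) (i : ℕ) (h : (x.drop i).take w.length = w) (j : ℕ)
    (hj : j < w.length) : x.getD (i + j) false = w.getD j false := by
  conv_rhs => rw [← h]
  simp [List.getD_eq_getElem?_getD, hj]

lemma blocks_bij (Z : ℕ → Bool) (Zn : ℕ → List Bool)
    (hlen : ∀ n, 1 ≤ n → (Zn n).length = n * 2 ^ n)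
    (henum : ∀ n, 1 ≤ n → ∀ w : List Bool, w.length = n → occB w (Zn n) = 1)
    (hZ : ∀ i : ℕ,
      Z i = (((List.range (i + 1)).map (fun k => Zn (k + 1))).flatten).getD i false)
    (n : ℕ) :
    Function.Bijective (fun (j : Fin (2 ^ (n + 1))) (t : Fin (n + 1)) =>
      Z (stA n + (j * (n + 1) + t))) := by
  rw [Fintype.bijective_iff_surjective_and_card]
  refine ⟨?_, by simp⟩
  intro v
  have h := henum (n + 1) (by omega) (List.ofFn v) (by simp)
  unfold occB at h
  obtain ⟨i, hi⟩ := List.exists_mem_of_length_pos (by rw [h]; exact one_pos)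
  simp only [List.mem_filter, List.mem_range, Bool.and_eq_true, decide_eq_true_eq,
    hlen (n + 1) (by omega)] at hi
  obtain ⟨h1, h2, h3⟩ := hi
  rw [List.length_ofFn] at h1 h2
  obtain ⟨j, rfl⟩ := Nat.dvd_of_mod_eq_zero h2
  have hj : j < 2 ^ (n + 1) := by
    have h4 : (n + 1) * j + (n + 1) ≤ (n + 1) * 2 ^ (n + 1) := by
      omega
    rw [← Nat.mul_succ] at h4
    exact Nat.le_of_mul_le_mul_left h4 (by omega)
  refine ⟨⟨j, hj⟩, ?_⟩
  funext t
  have h5 := take_drop_getD _ _ _ h3 t (by rw [List.length_ofFn]; exact t.2)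
  have ht := t.2
  show Z (stA n + (j * (n + 1) + t)) = v t
  rw [Z_eq Z Zn hlen hZ n _ (by rw [mul_comm j]; omega), mul_comm j, h5]
  rw [List.getD_eq_getElem _ _ (by rw [List.length_ofFn]; exact ht), List.getElem_ofFn]

/-- total deviation over the blocks of stage `n` -/
noncomputable def dev (w : List Bool) (Z : ℕ → Bool) (n j : ℕ) : ℝ :=
  |∑ t ∈ range (n + 1), cen w Z (stA n + j * (n + 1) + t)|

lemma dev_total (w : List Bool) (hw : 1 ≤ w.length) (Z : ℕ → Bool) (n : ℕ)
    (hb : Function.Bijective (fun (j : Fin (2 ^ (n + 1))) (t : Fin (n + 1)) =>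
      Z (stA n + (j * (n + 1) + t)))) :
    ∑ j ∈ range (2 ^ (n + 1)), dev w Z n j ≤ 2 ^ (n + 1) * (3 * w.length * √((n:ℝ) + 1)) := by
  have h1 : ∀ j : Fin (2 ^ (n + 1)), dev w Z n j ≤
      |gsum w (n + 1) (ext0 (fun t : Fin (n + 1) => Z (stA n + (j * (n + 1) + t))))|
        + w.length := by
    intro j
    have := block_close w (n + 1) hw (fun t => Z (stA n + j * (n + 1) + t))
      (ext0 (fun t : Fin (n + 1) => Z (stA n + (j * (n + 1) + t)))) (by
        intro t ht
        simp [ext0, ht, add_assoc])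
    refine le_trans (le_of_eq ?_) this
    unfold dev cen ind
    simp only [add_assoc]
  rw [← Fin.sum_univ_eq_sum_range]
  refine (Finset.sum_le_sum fun j _ => h1 j).trans ?_
  rw [Finset.sum_add_distrib]
  have h2 := hb.sum_comp (fun v : Fin (n + 1) → Bool => |gsum w (n + 1) (ext0 v)|)
  rw [h2]
  have h3 := first_moment w (n + 1) hw
  have h4 : (1:ℝ) ≤ √((n:ℝ) + 1) := by
    rw [Real.one_le_sqrt]
    have : (0:ℝ) ≤ n := by positivity
    linarith
  push_cast at h3
  simp only [sum_const, card_univ, Fintype.card_fin, nsmul_eq_mul]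
  push_cast
  have h5 : (w.length : ℝ) ≤ w.length * √((n:ℝ) + 1) := le_mul_of_one_le_right (by positivity) h4
  have h6 : (2:ℝ) ^ (n + 1) * w.length ≤ 2 ^ (n + 1) * (w.length * √((n:ℝ) + 1)) :=
    mul_le_mul_of_nonneg_left h5 (by positivity)
  linarith

/-- partial sums -/
noncomputable def psum (w : List Bool) (Z : ℕ → Bool) (m : ℕ) : ℝ := ∑ i ∈ range m, cen w Z i

lemma psum_blocks (w : List Bool) (Z : ℕ → Bool) (n J : ℕ) :
    |psum w Z (stA n + J * (n + 1))| ≤ |psum w Z (stA n)| + ∑ j ∈ range J, dev w Z n j := by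
  induction J with
  | zero => simp
  | succ J ih =>
    have : psum w Z (stA n + (J + 1) * (n + 1)) = psum w Z (stA n + J * (n + 1)) +
        ∑ t ∈ range (n + 1), cen w Z (stA n + J * (n + 1) + t) := by
      unfold psum
      rw [← Finset.sum_range_add]
      congr 2
      ring
    rw [this, Finset.sum_range_succ (dev w Z n), ← add_assoc]
    exact (abs_add_le _ _).trans (add_le_add ih le_rfl)

lemma psum_add (w : List Bool) (Z : ℕ → Bool) (a b : ℕ) :
    |psum w Z (a + b) - psum w Z a| ≤ b := by
  unfold psum
  rw [Finset.sum_range_add, add_sub_cancel_left]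
  refine (Finset.abs_sum_le_sum_abs _ _).trans ?_
  refine (Finset.sum_le_sum fun t _ => abs_cen_le w Z _).trans ?_
  simp

lemma psum_stA (w : List Bool) (hw : 1 ≤ w.length) (Z : ℕ → Bool)
    (hb : ∀ n, Function.Bijective (fun (j : Fin (2 ^ (n + 1))) (t : Fin (n + 1)) =>
      Z (stA n + (j * (n + 1) + t)))) (n : ℕ) :
    |psum w Z (stA n)| ≤ 2 ^ (n + 1) * (3 * w.length * √((n:ℝ) + 1)) := by
  induction n with
  | zero =>
    simp [psum, stA]
  | succ n ih =>
    have h1 := psum_blocks w Z n (2 ^ (n + 1))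
    have h2 := dev_total w hw Z n (hb n)
    rw [stA_succ, mul_comm (n + 1)]
    have h3 : √((n:ℝ) + 1) ≤ √(((n + 1 : ℕ) : ℝ) + 1) := by
      apply Real.sqrt_le_sqrt
      push_cast; linarith
    calc _ ≤ 2 * (2 ^ (n + 1) * (3 * w.length * √((n:ℝ) + 1))) := by linarith
      _ = 2 ^ (n + 1 + 1) * (3 * w.length * √((n:ℝ) + 1)) := by ring
      _ ≤ _ := by gcongr

lemma psum_bound (w : List Bool) (hw : 1 ≤ w.length) (Z : ℕ → Bool)
    (hb : ∀ n, Function.Bijective (fun (j : Fin (2 ^ (n + 1))) (t : Fin (n + 1)) =>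
      Z (stA n + (j * (n + 1) + t)))) (n m : ℕ) (h1 : stA n ≤ m) (h2 : m < stA (n + 1)) :
    |psum w Z m| ≤ 2 ^ (n + 1) * (7 * w.length * √((n:ℝ) + 1)) := by
  set J := (m - stA n) / (n + 1) with hJ
  set t := (m - stA n) % (n + 1) with ht
  have hm : m = stA n + J * (n + 1) + t := by
    have := Nat.div_add_mod' (m - stA n) (n + 1)
    rw [← hJ, ← ht] at this
    omega
  have htl : t < n + 1 := Nat.mod_lt _ (by omega)
  have hJl : J < 2 ^ (n + 1) := by
    rw [stA_succ] at h2
    apply Nat.div_lt_of_lt_mul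
    omega
  have e1 := psum_add w Z (stA n + J * (n + 1)) t
  rw [← hm] at e1
  have e2 := psum_blocks w Z n J
  have e3 : ∑ j ∈ range J, dev w Z n j ≤ ∑ j ∈ range (2 ^ (n + 1)), dev w Z n j := by
    apply Finset.sum_le_sum_of_subset_of_nonneg
    · intro x; simp; omega
    · intros; exact abs_nonneg _
  have e4 := dev_total w hw Z n (hb n)
  have e5 := psum_stA w hw Z hb n
  have e6 : |psum w Z m| ≤ |psum w Z (stA n + J * (n + 1))| + t := by
    have := abs_sub_abs_le_abs_sub (psum w Z m) (psum w Z (stA n + J * (n + 1)))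
    linarith
  have e7 : (t : ℝ) ≤ 2 ^ (n + 1) := by
    have := Nat.lt_two_pow_self (n := n + 1)
    exact_mod_cast (by omega)
  have h4 : (1:ℝ) ≤ √((n:ℝ) + 1) := by
    rw [Real.one_le_sqrt]
    have : (0:ℝ) ≤ n := by positivity
    linarith
  have hk : (1:ℝ) ≤ w.length := by exact_mod_cast hw
  have e8 : (2:ℝ) ^ (n + 1) ≤ 2 ^ (n + 1) * (w.length * √((n:ℝ) + 1)) :=
    le_mul_of_one_le_right (by positivity) (one_le_mul_of_one_le_of_one_le hk h4)
  linarith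

lemma exists_stage (m : ℕ) : ∃ n, stA n ≤ m ∧ m < stA (n + 1) := by
  have hex : ∃ n, m < stA (n + 1) := ⟨m, lt_of_lt_of_le (Nat.lt_succ_self m) (le_stA _)⟩
  refine ⟨Nat.find hex, ?_, Nat.find_spec hex⟩
  cases h : Nat.find hex with
  | zero => simp [stA]
  | succ n =>
    have := Nat.find_min hex (m := n) (by omega)
    omega

lemma psum_tendsto (w : List Bool) (hw : 1 ≤ w.length) (Z : ℕ → Bool)
    (hb : ∀ n, Function.Bijective (fun (j : Fin (2 ^ (n + 1))) (t : Fin (n + 1)) =>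
      Z (stA n + (j * (n + 1) + t)))) (ε : ℝ) (hε : 0 < ε) :
    ∀ᶠ m : ℕ in Filter.atTop, |psum w Z m| ≤ ε * m := by
  have hk : (1:ℝ) ≤ w.length := by exact_mod_cast hw
  set D : ℝ := ε / (14 * w.length) with hD
  have hDp : 0 < D := by positivity
  obtain ⟨n0, hn0⟩ := exists_nat_ge (2 / D ^ 2 + 1)
  filter_upwards [Filter.eventually_ge_atTop (stA (n0 + 1))] with m hm
  obtain ⟨n, h1, h2⟩ := exists_stage m
  have hn : n0 ≤ n := by
    by_contra hc
    have := stA_mono (show n + 1 ≤ n0 + 1 by omega)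
    omega
  have hnr : (n0:ℝ) ≤ n := by exact_mod_cast hn
  have h3 : √((n:ℝ) + 1) ≤ D * n := by
    rw [Real.sqrt_le_left (by positivity)]
    have ha : 2 / D ^ 2 + 1 ≤ (n:ℝ) := hn0.trans hnr
    have hb1 : 2 / D ^ 2 ≤ (n:ℝ) := by linarith
    have hc1 : (1:ℝ) ≤ n := by
      have : 0 < 2 / D ^ 2 := by positivity
      linarith
    rw [div_le_iff₀ (by positivity)] at hb1
    nlinarith [mul_le_mul_of_nonneg_right hb1 (show (0:ℝ) ≤ n by positivity)]
  refine (psum_bound w hw Z hb n m h1 h2).trans ?_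
  have h4 : ((n:ℝ) * 2 ^ n) ≤ m := by exact_mod_cast (mul_le_stA n).trans h1
  calc (2:ℝ) ^ (n + 1) * (7 * w.length * √((n:ℝ) + 1))
      ≤ 2 ^ (n + 1) * (7 * w.length * (D * n)) := by gcongr
    _ = ε * (n * 2 ^ n) := by rw [hD, pow_succ]; field_simp; ring
    _ ≤ ε * m := by gcongr

lemma occ_eq_s15 (w : List Bool) (Z : ℕ → Bool) (m : ℕ) (hw : 1 ≤ w.length) :
    (occ w ((List.range m).map Z) : ℝ) = ∑ i ∈ range (m + 1 - w.length), ind w Z i := by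
  unfold occ ind
  rw [Finset.sum_boole, List.length_map, List.length_range]
  congr 1
  rw [Finset.card_def, Finset.filter_val, Finset.range_val, Multiset.range, Multiset.filter_coe,
    Multiset.coe_card]
  congr 1
  refine List.filter_congr fun i hi => ?_
  simp only [List.mem_range] at hi
  simp only [decide_eq_decide]
  constructor
  · intro h j hj
    rw [← take_drop_getD _ _ _ h j hj]
    simp [List.getD_eq_getElem?_getD, show i + j < m by omega]
  · intro h
    apply List.ext_getElem
    · simp; omega
    · intro j hj1 hj2
      have := h j hj2
      simp [List.getD_eq_getElem?_getD, hj2] at this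
      simp [this]

/-- If `Z = Z_1 Z_2 Z_3 ⋯` where each `Z_n` has length `n·2^n` and is an enumeration of
all binary strings of length `n` in aligned blocks (`occ_B(w, Z_n) = 1` for all `w` of
length `n`), then `Z` is normal. -/
theorem stmt15 (Z : ℕ → Bool) (Zn : ℕ → List Bool)
    (hlen : ∀ n, 1 ≤ n → (Zn n).length = n * 2 ^ n)
    (henum : ∀ n, 1 ≤ n → ∀ w : List Bool, w.length = n → occB w (Zn n) = 1)
    (hZ : ∀ i : ℕ,
      Z i = (((List.range (i + 1)).map (fun k => Zn (k + 1))).flatten).getD i false)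
    (w : List Bool) (hw : w ≠ []) :
    Filter.Tendsto (fun m : ℕ => (occ w ((List.range m).map Z) : ℝ) / m)
      Filter.atTop (nhds ((2 ^ w.length : ℝ)⁻¹)) := by
  have hw1 : 1 ≤ w.length := List.length_pos_iff.2 hw
  have hb := blocks_bij Z Zn hlen henum hZ
  rw [Metric.tendsto_nhds]
  intro ε hε
  obtain ⟨M, hM⟩ := exists_nat_ge (2 * w.length / (ε / 4))
  filter_upwards [psum_tendsto w hw1 Z hb (ε / 4) (by positivity),
    Filter.eventually_ge_atTop (M + w.length + 1)] with m h1 h2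
  set p : ℝ := (2 ^ w.length : ℝ)⁻¹ with hp
  have hp0 : 0 < p := by positivity
  have hp1 : p ≤ 1 := inv_le_one_of_one_le₀ (one_le_pow₀ (by norm_num))
  have hm0 : (0:ℝ) < m := by exact_mod_cast (by omega)
  have hMm : (M:ℝ) ≤ m := by exact_mod_cast (by omega)
  have h3 : 2 * (w.length:ℝ) ≤ ε / 4 * m := by
    have := hM.trans hMm
    rw [div_le_iff₀ (by positivity)] at this
    linarith
  have h4 : (occ w ((List.range m).map Z) : ℝ)
      = psum w Z (m + 1 - w.length) + p * ((m + 1 - w.length : ℕ) : ℝ) := by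
    rw [occ_eq_s15 w Z m hw1, psum]
    unfold cen
    rw [Finset.sum_sub_distrib]
    simp [hp]
    ring
  have h5 := psum_add w Z (m + 1 - w.length) (w.length - 1)
  rw [show m + 1 - w.length + (w.length - 1) = m by omega] at h5
  have h6 : ((m + 1 - w.length : ℕ) : ℝ) = m - ((w.length - 1 : ℕ) : ℝ) := by
    rw [eq_sub_iff_add_eq]; exact_mod_cast (by omega)
  have h7 : ((w.length - 1 : ℕ) : ℝ) ≤ w.length := by exact_mod_cast (by omega)
  have h8 : (0:ℝ) ≤ ((w.length - 1 : ℕ) : ℝ) := by positivity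
  rw [Real.dist_eq, div_sub' hm0.ne', abs_div, abs_of_pos hm0, div_lt_iff₀ hm0, h4, h6]
  set q := ((w.length - 1 : ℕ) : ℝ)
  have h9 : p * q ≤ q := mul_le_of_le_one_left h8 hp1
  have h10 : 0 ≤ p * q := by positivity
  have h11 : 0 < ε * m := by positivity
  rw [abs_le] at h1 h5
  rw [abs_lt]
  constructor <;> nlinarith [h1.1, h1.2, h5.1, h5.2]
end
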